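/- arXiv:2010.14686 — 5 statements merged into one kernel-verified Lean document; each statement's English description precedes it below -/
import Mathlib

section
/- Let X₀ be a shift space and φ₀ : Σ → ℝ continuous, and suppose P_top(X₀, φ₀|_{X₀}) > b, where b = sup{∫φ₀ dμ : μ ∈ M_{X₀}} (equivalently, every equilibrium state of φ₀|_{X₀} has positive entropy). Let ε > 0 satisfy P_top(X₀,φ₀|_{X₀}) − b > 5ε. Then for every n ∈ ℕ there exists a shift space Z_n ⊆ Σ with L(Z_n, n) = L(X₀, n) and P_top(Z_n, φ₀|_{Z_n}) < P_top(X₀, φ₀|_{X₀}) − ε. In particular, the generalized pressure function (X, φ) ↦ P_top(X, φ|_X) is not continuous at (X₀, φ₀) with respect to the metric d(X,Y) = 2^{−min{n : L(X,n) ≠ L(Y,n)}} on shift spaces and the supremum norm on C(Σ,ℝ). -/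
open Filter MeasureTheory Topology
open scoped BigOperators ENNReal

noncomputable section

namespace PaperStmt

/-- The full two-sided shift: bi-infinite sequences over the alphabet `Fin d`. -/
abbrev FullShift (d : ℕ) := ℤ → Fin d

/-- The (left) shift map `f(x)_k = x_{k+1}`. -/
def shift (d : ℕ) : FullShift d → FullShift d := fun x k => x (k + 1)

/-- A (two-sided) shift space: a nonempty closed shift-invariant subset. -/
def IsShiftSpace {d : ℕ} (X : Set (FullShift d)) : Prop :=
  X.Nonempty ∧ IsClosed X ∧ shift d '' X = X

/-- The cylinder at position `0` determined by a word `w` of length `n`. -/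
def cyl {d n : ℕ} (w : Fin n → Fin d) : Set (FullShift d) :=
  {x | ∀ i : Fin n, x ((i : ℕ) : ℤ) = w i}

/-- The language of `X` in length `n`: words of length `n` occurring in elements of `X`
(at position `0`; for shift-invariant `X` this is occurrence anywhere). -/
def langSet {d : ℕ} (X : Set (FullShift d)) (n : ℕ) : Set (Fin n → Fin d) :=
  {w | (X ∩ cyl w).Nonempty}

/-- Birkhoff sum `S_n φ`. -/
def birkhoff {d : ℕ} (φ : FullShift d → ℝ) (n : ℕ) (x : FullShift d) : ℝ :=
  ∑ k ∈ Finset.range n, φ ((shift d)^[k] x)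

open Classical in
/-- The `n`-th partition function `Z_n(φ)` of `X`. -/
def Zfun {d : ℕ} (X : Set (FullShift d)) (φ : FullShift d → ℝ) (n : ℕ) : ℝ :=
  ∑ w : Fin n → Fin d,
    if (X ∩ cyl w).Nonempty then Real.exp (sSup (birkhoff φ n '' (X ∩ cyl w))) else 0

/-- Topological pressure `P_top(X,φ) = lim (1/n) log Z_n(φ) = inf_n (1/n) log Z_n(φ)`. -/
def pressure {d : ℕ} (X : Set (FullShift d)) (φ : FullShift d → ℝ) : ℝ :=
  ⨅ n : ℕ, (1 / (n + 1 : ℝ)) * Real.log (Zfun X φ (n + 1))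

/-- Topological entropy `h_top(X) = inf_n (1/n) log |L(X,n)|`. -/
def entTop {d : ℕ} (X : Set (FullShift d)) : ℝ :=
  ⨅ n : ℕ, (1 / (n + 1 : ℝ)) * Real.log ((langSet X (n + 1)).ncard : ℝ)

/-- The shift-invariant Borel probability measures giving `X` full measure. -/
def InvProb {d : ℕ} (X : Set (FullShift d)) : Set (Measure (FullShift d)) :=
  {μ | IsProbabilityMeasure μ ∧ μ.map (shift d) = μ ∧ μ X = 1}

/-- Measure-theoretic (Kolmogorov–Sinai) entropy of an invariant measure,
computed via cylinder sets: `h_μ = lim -(1/n) Σ_{|w|=n} μ[w] log μ[w]`. -/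
def mEnt {d : ℕ} (μ : Measure (FullShift d)) : ℝ :=
  Filter.liminf
    (fun n : ℕ => (1 / (n + 1 : ℝ)) *
      ∑ w : Fin (n + 1) → Fin d, Real.negMulLog (μ (cyl w)).toReal)
    Filter.atTop

/-- The free energy `h_μ(f) + ∫ φ dμ` of an invariant measure. -/
def freeEnergy {d : ℕ} (μ : Measure (FullShift d)) (φ : FullShift d → ℝ) : ℝ :=
  mEnt μ + ∫ x, φ x ∂μ

/-- `sup { ∫ φ dμ : μ ∈ M_X }`. -/
def intAvg {d : ℕ} (X : Set (FullShift d)) (φ : FullShift d → ℝ) : ℝ :=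
  sSup {r | ∃ μ ∈ InvProb X, r = ∫ x, φ x ∂μ}

/-- `μ` is an equilibrium state of `φ` on `X`. -/
def IsEqState {d : ℕ} (X : Set (FullShift d)) (φ : FullShift d → ℝ)
    (μ : Measure (FullShift d)) : Prop :=
  μ ∈ InvProb X ∧ freeEnergy μ φ = pressure X φ

/-- `p : ℤ → ℤ` parses `x` into consecutive generator blocks from `𝒢`:
the block of `x` from `p j` to `p (j+1) - 1` is a generator, for every `j`. -/
def IsParsing {d : ℕ} (𝒢 : Set (List (Fin d))) (x : FullShift d) (p : ℤ → ℤ) : Prop :=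
  StrictMono p ∧ ∀ j : ℤ, ∃ g ∈ 𝒢,
    p (j + 1) = p j + g.length ∧ ∀ (l : ℕ) (hl : l < g.length), x (p j + l) = g[l]

/-- `X_seq`: the set of bi-infinite concatenations of generators. -/
def Xseq {d : ℕ} (𝒢 : Set (List (Fin d))) : Set (FullShift d) :=
  {x | ∃ p : ℤ → ℤ, IsParsing 𝒢 x p}

/-- The coded shift generated by `𝒢`: the closure of `X_seq`. -/
def codedShift {d : ℕ} (𝒢 : Set (List (Fin d))) : Set (FullShift d) :=
  closure (Xseq 𝒢)

/-- `𝒢` is a unique representation: every `x ∈ X_seq` admits exactly one parsing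
into generator blocks (i.e. the set of cut points is uniquely determined). -/
def UniqueRep {d : ℕ} (𝒢 : Set (List (Fin d))) : Prop :=
  ∀ (x : FullShift d) (p q : ℤ → ℤ),
    IsParsing 𝒢 x p → IsParsing 𝒢 x q → Set.range p = Set.range q

/-- `P_seq(φ) = sup { h_μ + ∫φ dμ : μ ∈ M_X, μ(Xs) = 1 }`. -/
def PseqOf {d : ℕ} (X Xs : Set (FullShift d)) (φ : FullShift d → ℝ) : ℝ :=
  sSup {r | ∃ μ ∈ InvProb X, μ Xs = 1 ∧ r = freeEnergy μ φ}

/-- `P_lim(φ) = sup { h_μ + ∫φ dμ : μ ∈ M_X, μ(X \ Xs) = 1 }`. -/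
def PlimOf {d : ℕ} (X Xs : Set (FullShift d)) (φ : FullShift d → ℝ) : ℝ :=
  sSup {r | ∃ μ ∈ InvProb X, μ (X \ Xs) = 1 ∧ r = freeEnergy μ φ}

/-- `φ` has strict full sequential pressure: `P_seq(φ) > P_lim(φ)`. -/
def StrictFSP {d : ℕ} (X Xs : Set (FullShift d)) (φ : FullShift d → ℝ) : Prop :=
  PlimOf X Xs φ < PseqOf X Xs φ

/-- `φ ∈ FSSP(X)`: `φ` lies in the sup-norm closure (within `C(X,ℝ)`) of the
set of continuous potentials with strict full sequential pressure. -/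
def InFSSP {d : ℕ} (X Xs : Set (FullShift d)) (φ : FullShift d → ℝ) : Prop :=
  ∀ ε : ℝ, 0 < ε → ∃ ψ : FullShift d → ℝ, ContinuousOn ψ X ∧
    (∀ x ∈ X, |φ x - ψ x| ≤ ε) ∧ StrictFSP X Xs ψ

/-- The invariant probability measure equidistributed on the (period-`ℓ`) orbit of `y`. -/
def periodicMeasure {d : ℕ} (y : FullShift d) (ℓ : ℕ) : Measure (FullShift d) :=
  (ℓ : ℝ≥0∞)⁻¹ • ∑ k ∈ Finset.range ℓ, Measure.dirac ((shift d)^[k] y)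

/-- `y` is periodic with period `ℓ ≥ 1`. -/
def IsPeriodicOf {d : ℕ} (y : FullShift d) (ℓ : ℕ) : Prop :=
  1 ≤ ℓ ∧ (shift d)^[ℓ] y = y


lemma continuous_shift (d : ℕ) : Continuous (shift d) :=
  continuous_pi fun k => continuous_apply (k + 1)

lemma shift_iterate_apply {d : ℕ} (k : ℕ) (x : FullShift d) (j : ℤ) :
    (shift d)^[k] x j = x (j + k) := by
  induction k generalizing j with
  | zero => simp
  | succ k ih =>
    rw [Function.iterate_succ_apply']
    simp only [shift, ih]
    congr 1
    push_cast
    ring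

lemma exists_abs_le_of_continuous {d : ℕ} {φ : FullShift d → ℝ} (hφ : Continuous φ) :
    ∃ M : ℝ, ∀ x, |φ x| ≤ M := by
  obtain ⟨M, hM⟩ := isCompact_univ.exists_bound_of_continuousOn hφ.continuousOn
  exact ⟨M, fun x => hM x trivial⟩

/-- The integral against the empirical measure of an orbit segment is the Birkhoff average. -/
lemma integral_periodicMeasure {d : ℕ} (φ : FullShift d → ℝ) (x : FullShift d) (n : ℕ) :
    ∫ y, φ y ∂(periodicMeasure x n) = (n : ℝ)⁻¹ * birkhoff φ n x := by
  rw [periodicMeasure, integral_smul_measure, integral_finsetSum_measure]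
  · simp [birkhoff]
  · intro i _
    exact integrable_dirac (by simp)

lemma isProbabilityMeasure_periodicMeasure {d : ℕ} (x : FullShift d) {n : ℕ} (hn : n ≠ 0) :
    IsProbabilityMeasure (periodicMeasure x n) := by
  constructor
  simp only [periodicMeasure, Measure.smul_apply, Measure.finsetSum_apply, measure_univ,
    Finset.sum_const, Finset.card_range, smul_eq_mul, nsmul_eq_mul, mul_one]
  exact ENNReal.inv_mul_cancel (by exact_mod_cast hn) (by simp)

lemma periodicMeasure_apply_eq_one {d : ℕ} {X : Set (FullShift d)} (hX : Set.MapsTo (shift d) X X)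
    {x : FullShift d} (hx : x ∈ X) {n : ℕ} (hn : n ≠ 0) : periodicMeasure x n X = 1 := by
  have h : ∀ k, (shift d)^[k] x ∈ X := fun k => hX.iterate k hx
  simp only [periodicMeasure, Measure.smul_apply, Measure.finsetSum_apply,
    Measure.dirac_apply_of_mem (h _),
    Finset.sum_const, Finset.card_range, smul_eq_mul, nsmul_eq_mul, mul_one]
  exact ENNReal.inv_mul_cancel (by exact_mod_cast hn) (by simp)

lemma birkhoff_comp_shift_sub {d : ℕ} (φ : FullShift d → ℝ) (n : ℕ) (x : FullShift d) :
    birkhoff (φ ∘ shift d) n x - birkhoff φ n x = φ ((shift d)^[n] x) - φ x := by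
  simp only [birkhoff, Function.comp_apply, ← Function.iterate_succ_apply']
  rw [← Finset.sum_sub_distrib, Finset.sum_range_sub (fun k => φ ((shift d)^[k] x))]
  simp

lemma integral_le_intAvg {d : ℕ} {X : Set (FullShift d)} {φ : FullShift d → ℝ}
    (hφ : Continuous φ) {μ : Measure (FullShift d)} (hμ : μ ∈ InvProb X) :
    ∫ x, φ x ∂μ ≤ intAvg X φ := by
  obtain ⟨M, hM⟩ := exists_abs_le_of_continuous hφ
  refine le_csSup ⟨M, ?_⟩ ⟨μ, hμ, rfl⟩
  rintro _ ⟨ν, ⟨hν, -, -⟩, rfl⟩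
  have h := norm_integral_le_of_norm_le_const (μ := ν) (f := φ) (C := M)
    (Eventually.of_forall hM)
  simp only [probReal_univ, mul_one] at h
  exact (le_abs_self _).trans h

/-- Krylov–Bogolyubov: Birkhoff averages along `X` are eventually bounded by any number above the
largest space average over invariant measures of `X`. -/
lemma exists_birkhoff_le {d : ℕ} {X : Set (FullShift d)} (hX : IsClosed X)
    (hinv : Set.MapsTo (shift d) X X) {φ : FullShift d → ℝ} (hφ : Continuous φ) {c : ℝ}
    (hc : intAvg X φ < c) :
    ∃ N : ℕ, 0 < N ∧ ∀ x ∈ X, birkhoff φ N x ≤ N * c := by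
  by_contra! H
  choose x hxX hx using fun n : ℕ => H (n + 1) n.succ_pos
  let ν : ℕ → ProbabilityMeasure (FullShift d) := fun n =>
    ⟨periodicMeasure (x n) (n + 1), isProbabilityMeasure_periodicMeasure _ n.succ_ne_zero⟩
  have hcompact : IsCompact (Set.univ : Set (ProbabilityMeasure (FullShift d))) := by
    have h := isCompact_closure_of_isTightMeasureSet
      (S := (Set.univ : Set (ProbabilityMeasure (FullShift d)))) IsTightMeasureSet.of_compactSpace
    rwa [closure_univ] at h
  obtain ⟨μ, -, hμ⟩ := isCompact_iff_ultrafilter_le_nhds.1 hcompact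
    ((hyperfilter ℕ).map ν) (by simp)
  have hlim : Tendsto ν (hyperfilter ℕ) (𝓝 μ) := hμ
  have hle : (hyperfilter ℕ : Filter ℕ) ≤ atTop := Nat.hyperfilter_le_atTop
  have htendsto : ∀ ψ : FullShift d → ℝ, Continuous ψ →
      Tendsto (fun n : ℕ => ((n + 1 : ℕ) : ℝ)⁻¹ * birkhoff ψ (n + 1) (x n)) (hyperfilter ℕ)
        (𝓝 (∫ y, ψ y ∂(μ : Measure (FullShift d)))) := by
    intro ψ hψ
    have h := ProbabilityMeasure.tendsto_iff_forall_integral_tendsto.1 hlim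
      (BoundedContinuousFunction.mkOfCompact ⟨ψ, hψ⟩)
    simpa [ν, integral_periodicMeasure ψ] using h
  have hmem : (μ : Measure (FullShift d)) ∈ InvProb X := by
    refine ⟨inferInstance, ?_, ?_⟩
    · have : IsProbabilityMeasure ((μ : Measure (FullShift d)).map (shift d)) :=
        Measure.isProbabilityMeasure_map (continuous_shift d).measurable.aemeasurable
      refine ext_of_forall_integral_eq_of_IsFiniteMeasure fun ψ => ?_
      rw [integral_map (continuous_shift d).measurable.aemeasurable
        ψ.continuous.aestronglyMeasurable]
      have h1 := (htendsto _ (ψ.continuous.comp (continuous_shift d))).sub (htendsto _ ψ.continuous)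
      have h2 : Tendsto (fun n : ℕ => ((n + 1 : ℕ) : ℝ)⁻¹ * birkhoff (ψ ∘ shift d) (n + 1) (x n) -
          ((n + 1 : ℕ) : ℝ)⁻¹ * birkhoff ψ (n + 1) (x n)) (hyperfilter ℕ) (𝓝 0) := by
        simp only [← mul_sub, birkhoff_comp_shift_sub]
        obtain ⟨M, hM⟩ := exists_abs_le_of_continuous ψ.continuous
        have h3 : Tendsto (fun n : ℕ => ((n + 1 : ℕ) : ℝ)⁻¹) (hyperfilter ℕ) (𝓝 0) :=
          ((tendsto_add_atTop_iff_nat 1).2 tendsto_inv_atTop_nhds_zero_nat).mono_left hle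
        refine h3.zero_mul_isBoundedUnder_le ?_
        refine isBoundedUnder_of ⟨M + M, fun n => ?_⟩
        exact (abs_sub _ _).trans (add_le_add (hM _) (hM _))
      exact sub_eq_zero.1 (tendsto_nhds_unique h1 h2)
    · have h := ProbabilityMeasure.limsup_measure_closed_le_of_tendsto hlim hX
      refine le_antisymm prob_le_one ?_
      have h1 : ∀ n, ((ν n : ProbabilityMeasure (FullShift d)) : Measure (FullShift d)) X = 1 :=
        fun n => periodicMeasure_apply_eq_one hinv (hxX n) n.succ_ne_zero
      simpa [h1] using h
  refine (hc.trans_le ?_).not_ge (integral_le_intAvg hφ hmem)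
  refine ge_of_tendsto (htendsto φ hφ) (Eventually.of_forall fun n => ?_)
  rw [le_inv_mul_iff₀ (by positivity)]
  exact (hx n).le

/-- Uniform continuity of a continuous function on the full shift, in terms of coordinates. -/
lemma exists_window_abs_sub_lt {d : ℕ} {φ : FullShift d → ℝ} (hφ : Continuous φ) {ε : ℝ}
    (hε : 0 < ε) :
    ∃ r : ℕ, ∀ u v : FullShift d, (∀ k : ℤ, -r ≤ k → k ≤ r → u k = v k) → |φ u - φ v| < ε := by
  by_contra! H
  choose u v huv hφuv using H
  obtain ⟨a, -, ha⟩ := isCompact_iff_ultrafilter_le_nhds.1 (isCompact_univ (X := FullShift d))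
    ((hyperfilter ℕ).map u) (by simp)
  obtain ⟨b, -, hb⟩ := isCompact_iff_ultrafilter_le_nhds.1 (isCompact_univ (X := FullShift d))
    ((hyperfilter ℕ).map v) (by simp)
  have ha' : Tendsto u (hyperfilter ℕ) (𝓝 a) := ha
  have hb' : Tendsto v (hyperfilter ℕ) (𝓝 b) := hb
  have hab : a = b := by
    funext k
    have h1 := tendsto_pi_nhds.1 ha' k
    refine tendsto_nhds_unique (h1.congr' ?_) (tendsto_pi_nhds.1 hb' k)
    refine Nat.hyperfilter_le_atTop ?_
    filter_upwards [eventually_ge_atTop k.natAbs] with n hn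
    exact huv n k (by omega) (by omega)
  have h := ((hφ.tendsto a).comp ha').sub ((hφ.tendsto b).comp hb') |>.abs
  rw [hab, sub_self, abs_zero] at h
  exact hε.not_ge (ge_of_tendsto h (Eventually.of_forall hφuv))

lemma isOpen_cyl {d n : ℕ} (w : Fin n → Fin d) : IsOpen (cyl w) := by
  simp only [cyl, Set.ofPred_forall]
  exact isOpen_iInter_of_finite fun i =>
    (isOpen_discrete ({w i} : Set (Fin d))).preimage
      (continuous_apply ((i : ℕ) : ℤ) : Continuous fun x : FullShift d => x ((i : ℕ) : ℤ))

lemma IsShiftSpace.mapsTo {d : ℕ} {X : Set (FullShift d)} (hX : IsShiftSpace X) :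
    Set.MapsTo (shift d) X X := fun x hx => by
  have h := Set.mem_image_of_mem (shift d) hx
  rwa [hX.2.2] at h

lemma IsShiftSpace.translate_mem {d : ℕ} {X : Set (FullShift d)} (hX : IsShiftSpace X)
    {x : FullShift d} (hx : x ∈ X) (k : ℤ) : (fun j => x (j + k)) ∈ X := by
  induction k using Int.induction_on with
  | zero => simpa using hx
  | succ k ih =>
    convert hX.mapsTo ih using 1
    funext j
    simp only [shift]
    congr 1
    ring
  | pred k ih =>
    rw [← hX.2.2] at ih
    obtain ⟨y, hy, hyx⟩ := ih
    convert hy using 1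
    funext j
    have h := congrFun hyx (j - 1)
    simp only [shift, sub_add_cancel] at h
    rw [h]
    congr 1
    ring

/-- Equality of languages in one length gives equality in all smaller lengths. -/
lemma langSet_eq_of_le {d : ℕ} {X Y : Set (FullShift d)} {m n : ℕ} (hmn : m ≤ n)
    (h : langSet X n = langSet Y n) : langSet X m = langSet Y m := by
  have key : ∀ {X Y : Set (FullShift d)}, langSet X n ⊆ langSet Y n →
      langSet X m ⊆ langSet Y m := by
    rintro X Y h w ⟨x, hxX, hxw⟩
    obtain ⟨y, hyY, hy⟩ := h (show (fun i : Fin n => x ((i : ℕ) : ℤ)) ∈ langSet X n from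
      ⟨x, hxX, fun i => rfl⟩)
    exact ⟨y, hyY, fun i => (hy (i.castLE hmn)).trans (hxw i)⟩
  exact (key h.le).antisymm (key h.ge)

lemma birkhoff_add {d : ℕ} (φ : FullShift d → ℝ) (m n : ℕ) (x : FullShift d) :
    birkhoff φ (m + n) x = birkhoff φ m x + birkhoff φ n ((shift d)^[m] x) := by
  simp only [birkhoff, Finset.sum_range_add, ← Function.iterate_add_apply, add_comm]

lemma birkhoff_mul_le {d : ℕ} {Z : Set (FullShift d)} (hZ : Set.MapsTo (shift d) Z Z)
    {φ : FullShift d → ℝ} {N : ℕ} {c : ℝ} (h : ∀ y ∈ Z, birkhoff φ N y ≤ N * c) (q : ℕ) :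
    ∀ y ∈ Z, birkhoff φ (N * q) y ≤ (N * q : ℕ) * c := by
  induction q with
  | zero => simp [birkhoff]
  | succ q ih =>
    intro y hy
    rw [Nat.mul_succ, birkhoff_add]
    have h1 := h _ (hZ.iterate (N * q) hy)
    have h2 := ih y hy
    push_cast at h2 ⊢
    linarith

/-- A shift space sharing a sufficiently long language with `X` has almost the same upper bounds
on its Birkhoff sums. -/
lemma birkhoff_le_of_langSet_eq {d : ℕ} {X Z : Set (FullShift d)} (hX : IsShiftSpace X)
    (hZ : IsShiftSpace Z) {φ : FullShift d → ℝ} {N r M : ℕ} {c ε : ℝ}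
    (hc : ∀ x ∈ X, birkhoff φ N x ≤ N * c)
    (hr : ∀ u v : FullShift d, (∀ k : ℤ, -r ≤ k → k ≤ r → u k = v k) → |φ u - φ v| < ε)
    (hM : N + 2 * r ≤ M) (hlang : langSet Z M = langSet X M) {y : FullShift d} (hy : y ∈ Z) :
    birkhoff φ N y ≤ N * (c + ε) := by
  obtain ⟨x, hxX, hx⟩ : (fun i : Fin M => y ((i : ℕ) + (-r : ℤ))) ∈ langSet X M := by
    rw [← hlang]
    exact ⟨_, hZ.translate_mem hy (-r), fun i => rfl⟩
  have hxy : ∀ j : ℤ, -r ≤ j → j < N + r → y j = x (j + r) := by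
    intro j h1 h2
    have h := hx ⟨(j + r).toNat, by omega⟩
    simp only at h
    rw [Int.toNat_of_nonneg (by omega)] at h
    rw [h]
    congr 1
    ring
  have hle : birkhoff φ N y ≤ birkhoff φ N (fun j => x (j + r)) + N * ε := by
    have h2 : (N : ℝ) * ε = ∑ _k ∈ Finset.range N, ε := by simp
    rw [h2, birkhoff, birkhoff, ← Finset.sum_add_distrib]
    refine Finset.sum_le_sum fun k hk => ?_
    have hk := Finset.mem_range.1 hk
    have h := hr ((shift d)^[k] y) ((shift d)^[k] fun j => x (j + r)) fun j h1 h2 => by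
      rw [shift_iterate_apply, shift_iterate_apply]
      exact hxy _ (by omega) (by omega)
    linarith [le_abs_self (φ ((shift d)^[k] y) - φ ((shift d)^[k] fun j => x (j + r)))]
  have h3 := hc _ (hX.translate_mem hxX r)
  linarith

lemma abs_birkhoff_le {d : ℕ} {φ : FullShift d → ℝ} {M : ℝ} (hM : ∀ x, |φ x| ≤ M) (n : ℕ)
    (x : FullShift d) : |birkhoff φ n x| ≤ n * M := by
  refine (Finset.abs_sum_le_sum_abs _ _).trans ?_
  refine (Finset.sum_le_sum fun k _ => hM _).trans ?_
  simp

lemma exp_le_Zfun {d : ℕ} {Z : Set (FullShift d)} {φ : FullShift d → ℝ} {M : ℝ}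
    (hM : ∀ x, |φ x| ≤ M) {y : FullShift d} (hy : y ∈ Z) (n : ℕ) :
    Real.exp (birkhoff φ n y) ≤ Zfun Z φ n := by
  classical
  have hmem : y ∈ Z ∩ cyl (fun i : Fin n => y ((i : ℕ) : ℤ)) := ⟨hy, fun i => rfl⟩
  have h := Finset.single_le_sum (f := fun w : Fin n → Fin d =>
    if (Z ∩ cyl w).Nonempty then Real.exp (sSup (birkhoff φ n '' (Z ∩ cyl w))) else 0)
    (fun w _ => by split_ifs <;> positivity) (Finset.mem_univ (fun i : Fin n => y ((i : ℕ) : ℤ)))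
  simp only [if_pos (show (Z ∩ cyl (fun i : Fin n => y ((i : ℕ) : ℤ))).Nonempty from ⟨y, hmem⟩)]
    at h
  refine le_trans (Real.exp_le_exp.2 ?_) (h.trans_eq ?_)
  · refine le_csSup ⟨n * M, ?_⟩ (Set.mem_image_of_mem _ hmem)
    rintro _ ⟨z, -, rfl⟩
    exact (le_abs_self _).trans (abs_birkhoff_le hM n z)
  · rw [Zfun]

lemma Zfun_le {d : ℕ} {Z : Set (FullShift d)} {φ : FullShift d → ℝ} {n : ℕ} {s : ℝ}
    (hs : ∀ y ∈ Z, birkhoff φ n y ≤ s) : Zfun Z φ n ≤ (langSet Z n).ncard * Real.exp s := by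
  classical
  have hcard : (langSet Z n).ncard =
      (Finset.univ.filter fun w : Fin n → Fin d => (Z ∩ cyl w).Nonempty).card := by
    rw [← Set.ncard_coe_finset]
    congr 1
    ext w
    simp [langSet]
  rw [hcard, ← nsmul_eq_mul, ← Finset.sum_const, Finset.sum_filter, Zfun]
  refine Finset.sum_le_sum fun w _ => ?_
  split_ifs with h
  · refine Real.exp_le_exp.2 (csSup_le (h.image _) ?_)
    rintro _ ⟨y, hy, rfl⟩
    exact hs y hy.1
  · exact le_rfl

lemma pressure_le_log_Zfun {d : ℕ} {Z : Set (FullShift d)} (hZ : Z.Nonempty)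
    {φ : FullShift d → ℝ} (hφ : Continuous φ) {n : ℕ} (hn : 0 < n) :
    pressure Z φ ≤ Real.log (Zfun Z φ n) / n := by
  obtain ⟨M, hM⟩ := exists_abs_le_of_continuous hφ
  obtain ⟨y, hy⟩ := hZ
  obtain ⟨k, rfl⟩ := Nat.exists_eq_succ_of_ne_zero hn.ne'
  refine (ciInf_le ⟨-M, ?_⟩ k).trans_eq ?_
  · rintro _ ⟨k, rfl⟩
    have h1 := Real.log_le_log (Real.exp_pos _) (exp_le_Zfun hM hy (k + 1))
    have h2 := (abs_le.1 (abs_birkhoff_le hM (k + 1) y)).1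
    rw [Real.log_exp] at h1
    push_cast at h2
    simp only [one_div]
    rw [le_inv_mul_iff₀ (by positivity)]
    linarith
  · push_cast
    ring

/-- A shift space of linear word complexity has pressure bounded by its Birkhoff averages. -/
lemma pressure_le_of_linear_complexity {d : ℕ} {Z : Set (FullShift d)} (hZ : Z.Nonempty)
    (hinv : Set.MapsTo (shift d) Z Z) {φ : FullShift d → ℝ} (hφ : Continuous φ)
    {N K : ℕ} (hN : 0 < N) {c : ℝ} (hc : ∀ y ∈ Z, birkhoff φ N y ≤ N * c)
    (hK : ∀ n, (langSet Z n).ncard ≤ K * (n + 2)) : pressure Z φ ≤ c := by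
  obtain ⟨M, hM⟩ := exists_abs_le_of_continuous hφ
  obtain ⟨y, hy⟩ := id hZ
  have hKpos : 0 < K := by
    have h1 : 0 < (langSet Z 0).ncard :=
      (Set.ncard_pos (Set.toFinite _)).2 ⟨Fin.elim0, y, hy, fun i => i.elim0⟩
    exact Nat.pos_of_mul_pos_right (h1.trans_le (hK 0))
  have hbound : ∀ q : ℕ, 0 < q → pressure Z φ ≤
      c + (Real.log (3 * K) / (N * q : ℕ) + Real.log (N * q : ℕ) / (N * q : ℕ)) := by
    intro q hq
    have hn : 0 < N * q := Nat.mul_pos hN hq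
    refine (pressure_le_log_Zfun hZ hφ hn).trans ?_
    have h1 := Zfun_le (birkhoff_mul_le hinv hc q)
    generalize N * q = n at hn h1 ⊢
    have hn' : (1 : ℝ) ≤ n := by exact_mod_cast hn
    have hK' : (0 : ℝ) < K := by exact_mod_cast hKpos
    have h2 : ((langSet Z n).ncard : ℝ) ≤ 3 * K * n := by
      have h : ((langSet Z n).ncard : ℝ) ≤ K * (n + 2) := by exact_mod_cast hK n
      nlinarith
    have h3 : Zfun Z φ n ≤ 3 * K * n * Real.exp (n * c) :=
      h1.trans (mul_le_mul_of_nonneg_right h2 (Real.exp_pos _).le)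
    have h4 := Real.log_le_log ((Real.exp_pos _).trans_le (exp_le_Zfun hM hy n)) h3
    rw [Real.log_mul (by positivity) (by positivity), Real.log_mul (by positivity) (by positivity),
      Real.log_exp] at h4
    rw [div_le_iff₀ (by positivity)]
    refine h4.trans_eq ?_
    field_simp
    ring
  have hlim : Tendsto (fun x : ℝ => c + (Real.log (3 * K) / x + Real.log x / x)) atTop (𝓝 c) := by
    have h1 : Tendsto (fun x : ℝ => Real.log x / x) atTop (𝓝 0) := by
      simpa using Real.tendsto_pow_log_div_mul_add_atTop 1 0 1 one_ne_zero
    simpa using ((tendsto_const_nhds.div_atTop tendsto_id).add h1).const_add c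
  have hcast : Tendsto (fun q : ℕ => ((N * q : ℕ) : ℝ)) atTop atTop :=
    tendsto_natCast_atTop_atTop.comp (tendsto_id.const_mul_atTop' hN)
  refine ge_of_tendsto (hlim.comp hcast) ?_
  filter_upwards [eventually_gt_atTop 0] with q hq using hbound q hq

/-- The bi-infinite walk through `v` following `F` forwards and `B` backwards. -/
def walk {V : Type*} (F B : V → V) (v : V) (k : ℤ) : V := F^[k.toNat] (B^[(-k).toNat] v)

/-- The point whose coordinates are the first letters of the words visited by a walk. -/
def walkPoint {d m : ℕ} (F B : (Fin (m + 1) → Fin d) → Fin (m + 1) → Fin d)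
    (v : Fin (m + 1) → Fin d) : FullShift d := fun k => walk F B v k 0

lemma walk_mem {V : Type*} {F B : V → V} {L : Set V} (hF : Set.MapsTo F L L)
    (hB : Set.MapsTo B L L) {v : V} (hv : v ∈ L) (k : ℤ) : walk F B v k ∈ L :=
  hF.iterate _ (hB.iterate _ hv)

/-- The word of `walkPoint F B v` at position `k` is the one visited by the walk at time `k`. -/
lemma walkPoint_add {d m : ℕ} {F B : (Fin (m + 1) → Fin d) → Fin (m + 1) → Fin d}
    {L : Set (Fin (m + 1) → Fin d)} (hF : Set.MapsTo F L L) (hB : Set.MapsTo B L L)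
    (hFs : ∀ v ∈ L, ∀ i : Fin m, F v i.castSucc = v i.succ)
    (hBs : ∀ v ∈ L, ∀ i : Fin m, B v i.succ = v i.castSucc)
    {v : Fin (m + 1) → Fin d} (hv : v ∈ L) (k : ℤ) (i : Fin (m + 1)) :
    walkPoint F B v (k + (i : ℕ)) = walk F B v k i := by
  have hstep : ∀ (k : ℤ) (i : Fin m),
      walk F B v k i.succ = walk F B v (k + 1) i.castSucc := by
    intro k i
    rcases le_or_gt 0 k with hk | hk
    · have h1 : (k + 1).toNat = k.toNat + 1 := by omega
      have h2 : (-k).toNat = 0 := by omega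
      have h3 : (-(k + 1)).toNat = 0 := by omega
      rw [walk, walk, h1, h2, h3, Function.iterate_succ_apply',
        hFs _ (hF.iterate _ (hB.iterate _ hv))]
    · have h1 : (-k).toNat = (-(k + 1)).toNat + 1 := by omega
      have h2 : k.toNat = 0 := by omega
      have h3 : (k + 1).toNat = 0 := by omega
      rw [walk, walk, h1, h2, h3, Function.iterate_succ_apply']
      exact hBs _ (hB.iterate _ hv) i
  induction i using Fin.induction generalizing k with
  | zero => simp [walkPoint]
  | succ i ih =>
    rw [hstep, ← ih]
    congr 1
    simp only [Fin.val_succ, Fin.val_castSucc]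
    push_cast
    ring

/-- The walk points have at most linearly many words of length `n`. -/
lemma ncard_walkPoint_words_le {d m : ℕ} (F B : (Fin (m + 1) → Fin d) → Fin (m + 1) → Fin d)
    (n : ℕ) :
    {u : Fin n → Fin d | ∃ v k, u = fun i : Fin n => walkPoint F B v (k + (i : ℕ))}.ncard ≤
      Nat.card (Fin (m + 1) → Fin d) * (n + 2) := by
  let g : (Fin (m + 1) → Fin d) × Option (Option (Fin n)) → Fin n → Fin d := fun p =>
    match p.2 with
    | none => fun i => F^[(i : ℕ)] p.1 0
    | some none => fun i => B^[n - (i : ℕ)] p.1 0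
    | some (some j) => fun i => walkPoint F B p.1 (-((j : ℕ) + 1 : ℤ) + (i : ℕ))
  have hsub : {u : Fin n → Fin d | ∃ v k, u = fun i : Fin n => walkPoint F B v (k + (i : ℕ))} ⊆
      g '' Set.univ := by
    rintro _ ⟨v, k, rfl⟩
    rcases le_or_gt 0 k with hk | hk
    · refine ⟨(F^[k.toNat] v, none), trivial, ?_⟩
      funext i
      have h1 : (k + (i : ℕ)).toNat = i + k.toNat := by omega
      have h2 : (-(k + (i : ℕ))).toNat = 0 := by omega
      simp only [g, walkPoint, walk, h1, h2, Function.iterate_add_apply, Function.iterate_zero,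
        id_eq]
    rcases le_or_gt k (-n) with hk' | hk'
    · refine ⟨(B^[(-n - k).toNat] v, some none), trivial, ?_⟩
      funext i
      have h1 : (-(k + (i : ℕ))).toNat = (n - i) + (-n - k).toNat := by omega
      have h2 : (k + (i : ℕ)).toNat = 0 := by omega
      simp only [g, walkPoint, walk, h1, h2, Function.iterate_add_apply, Function.iterate_zero,
        id_eq]
    · refine ⟨(v, some (some ⟨(-k - 1).toNat, by omega⟩)), trivial, ?_⟩
      funext i
      simp only [g]
      congr 1
      omega
  refine (Set.ncard_le_ncard hsub (Set.toFinite _)).trans ?_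
  refine (Set.ncard_image_le (Set.toFinite _)).trans_eq ?_
  rw [Set.ncard_univ, Nat.card_prod]
  simp

/-- For every length there is a shift space with the same words of that length and linear word
complexity. -/
lemma exists_linear_complexity {d : ℕ} {X : Set (FullShift d)} (hX : IsShiftSpace X) (m : ℕ) :
    ∃ Z : Set (FullShift d), IsShiftSpace Z ∧ langSet Z (m + 1) = langSet X (m + 1) ∧
      ∃ K : ℕ, ∀ n, (langSet Z n).ncard ≤ K * (n + 2) := by
  have hnext : ∀ v : Fin (m + 1) → Fin d, ∃ u : Fin (m + 1) → Fin d, v ∈ langSet X (m + 1) →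
      u ∈ langSet X (m + 1) ∧ ∀ i : Fin m, u i.castSucc = v i.succ := by
    intro v
    by_cases hv : v ∈ langSet X (m + 1)
    · obtain ⟨x, hx, hxv⟩ := id hv
      refine ⟨fun i => x ((i : ℕ) + 1), fun _ => ⟨⟨_, hX.translate_mem hx 1, fun i => rfl⟩, ?_⟩⟩
      intro i
      rw [← hxv]
      simp
    · exact ⟨v, fun h => absurd h hv⟩
  have hprev : ∀ v : Fin (m + 1) → Fin d, ∃ u : Fin (m + 1) → Fin d, v ∈ langSet X (m + 1) →
      u ∈ langSet X (m + 1) ∧ ∀ i : Fin m, u i.succ = v i.castSucc := by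
    intro v
    by_cases hv : v ∈ langSet X (m + 1)
    · obtain ⟨x, hx, hxv⟩ := id hv
      refine ⟨fun i => x ((i : ℕ) + -1), fun _ => ⟨⟨_, hX.translate_mem hx (-1), fun i => rfl⟩, ?_⟩⟩
      intro i
      rw [← hxv]
      simp
    · exact ⟨v, fun h => absurd h hv⟩
  choose F hF using hnext
  choose B hB using hprev
  set L := langSet X (m + 1)
  have hword : ∀ {v}, v ∈ L → ∀ (k : ℤ) (i : Fin (m + 1)),
      walkPoint F B v (k + (i : ℕ)) = walk F B v k i := fun hv =>
    walkPoint_add (fun v hv => (hF v hv).1) (fun v hv => (hB v hv).1)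
      (fun v hv => (hF v hv).2) (fun v hv => (hB v hv).2) hv
  let O : Set (FullShift d) := {y | ∃ v ∈ L, ∃ k : ℤ, y = fun j => walkPoint F B v (j + k)}
  have hO : shift d '' O = O := by
    ext y
    constructor
    · rintro ⟨_, ⟨v, hv, k, rfl⟩, rfl⟩
      refine ⟨v, hv, k + 1, ?_⟩
      funext j
      simp only [shift]
      congr 1
      ring
    · rintro ⟨v, hv, k, rfl⟩
      refine ⟨_, ⟨v, hv, k - 1, rfl⟩, ?_⟩
      funext j
      simp only [shift]
      congr 1
      ring
  have hlang : ∀ n, langSet (closure O) n =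
      {u | ∃ v ∈ L, ∃ k : ℤ, u = fun i : Fin n => walkPoint F B v (k + (i : ℕ))} := by
    intro n
    ext u
    simp only [langSet, Set.mem_ofPred_eq, closure_inter_open_nonempty_iff (isOpen_cyl u)]
    constructor
    · rintro ⟨_, ⟨v, hv, k, rfl⟩, hu⟩
      refine ⟨v, hv, k, funext fun i => ?_⟩
      rw [← hu i, add_comm]
    · rintro ⟨v, hv, k, rfl⟩
      exact ⟨_, ⟨v, hv, k, rfl⟩, fun i => by simp only [add_comm]⟩
  refine ⟨closure O, ⟨?_, isClosed_closure, ?_⟩, ?_, Nat.card (Fin (m + 1) → Fin d), fun n => ?_⟩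
  · obtain ⟨x, hx⟩ := hX.1
    have hxL : (fun i : Fin (m + 1) => x ((i : ℕ) : ℤ)) ∈ L := ⟨x, hx, fun i => rfl⟩
    exact ⟨_, subset_closure ⟨_, hxL, 0, rfl⟩⟩
  · rw [← (continuous_shift d).isClosedMap.closure_image_eq_of_continuous (continuous_shift d), hO]
  · rw [hlang]
    ext u
    constructor
    · rintro ⟨v, hv, k, rfl⟩
      simp only [hword hv]
      exact walk_mem (fun v hv => (hF v hv).1) (fun v hv => (hB v hv).1) hv k
    · intro hu
      refine ⟨u, hu, 0, funext fun i => ?_⟩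
      rw [hword hu]
      simp [walk]
  · rw [hlang]
    refine (Set.ncard_le_ncard ?_ (Set.toFinite _)).trans (ncard_walkPoint_words_le F B n)
    rintro u ⟨v, -, k, rfl⟩
    exact ⟨v, k, rfl⟩

/-- if every equilibrium state of `φ₀|_{X₀}` has positive entropy
(equivalently `P_top(X₀,φ₀) > b`), and `5ε < P_top(X₀,φ₀) − b`, then for every `n`
there is a shift space `Z` agreeing with `X₀` in all words of length `n` whose pressure
is at least `ε` below that of `X₀`; in particular the generalized pressure function is
not continuous at `(X₀,φ₀)` with respect to the language metric. -/
theorem statement4 {d : ℕ} (hd : 2 ≤ d) (X₀ : Set (FullShift d)) (hX₀ : IsShiftSpace X₀)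
    (φ₀ : FullShift d → ℝ) (hφ₀ : Continuous φ₀)
    (hb : intAvg X₀ φ₀ < pressure X₀ φ₀)
    (ε : ℝ) (hε : 0 < ε) (hε5 : 5 * ε < pressure X₀ φ₀ - intAvg X₀ φ₀) :
    (∀ n : ℕ, ∃ Z : Set (FullShift d), IsShiftSpace Z ∧ langSet Z n = langSet X₀ n ∧
        pressure Z φ₀ < pressure X₀ φ₀ - ε) ∧
      ¬ (∀ δ : ℝ, 0 < δ → ∃ N : ℕ, ∀ Z : Set (FullShift d), IsShiftSpace Z →
          (∀ j : ℕ, j ≤ N → langSet Z j = langSet X₀ j) →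
          |pressure Z φ₀ - pressure X₀ φ₀| < δ) := by
  have main : ∀ n : ℕ, ∃ Z : Set (FullShift d), IsShiftSpace Z ∧ langSet Z n = langSet X₀ n ∧
      pressure Z φ₀ < pressure X₀ φ₀ - ε := by
    intro n
    obtain ⟨N, hN, hNc⟩ := exists_birkhoff_le hX₀.2.1 hX₀.mapsTo hφ₀
      (show intAvg X₀ φ₀ < intAvg X₀ φ₀ + ε by linarith)
    obtain ⟨r, hr⟩ := exists_window_abs_sub_lt hφ₀ hε
    obtain ⟨Z, hZ, hlang, K, hK⟩ := exists_linear_complexity hX₀ (n + N + 2 * r)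
    refine ⟨Z, hZ, langSet_eq_of_le (by omega) hlang, ?_⟩
    have h := pressure_le_of_linear_complexity hZ.1 hZ.mapsTo hφ₀ hN
      (fun y hy => birkhoff_le_of_langSet_eq hX₀ hZ hNc hr (by omega) hlang hy) hK
    linarith
  refine ⟨main, fun hcont => ?_⟩
  obtain ⟨N, hN⟩ := hcont ε hε
  obtain ⟨Z, hZ, hlang, hlt⟩ := main N
  have h := (abs_lt.1 (hN Z hZ fun j hj => langSet_eq_of_le hj hlang)).1
  linarith

end PaperStmt
end
end

section
/- The entropy map X ↦ h_top(X), defined on the set of nonempty shift spaces over the alphabet A equipped with the metric d(X,Y) = 2^{−min{n : L(X,n) ≠ L(Y,n)}}, is continuous at a shift space X₀ if and only if h_top(X₀) = 0. -/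
open Filter MeasureTheory Topology
open scoped BigOperators ENNReal

noncomputable section

namespace PaperStmt

/-- The logarithmic word counts averaged in `entTop` are nonnegative. -/
lemma entTop_term_nonneg {d : ℕ} (X : Set (FullShift d)) (n : ℕ) :
    0 ≤ (1 / (n + 1 : ℝ)) * Real.log ((langSet X (n + 1)).ncard : ℝ) :=
  mul_nonneg (by positivity) (Real.log_natCast_nonneg _)

lemma entTop_nonneg {d : ℕ} (X : Set (FullShift d)) : 0 ≤ entTop X :=
  Real.iInf_nonneg (entTop_term_nonneg X)

lemma entTop_le {d : ℕ} (X : Set (FullShift d)) (n : ℕ) :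
    entTop X ≤ (1 / (n + 1 : ℝ)) * Real.log ((langSet X (n + 1)).ncard : ℝ) :=
  ciInf_le ⟨0, by rintro _ ⟨m, rfl⟩; exact entTop_term_nonneg X m⟩ n

/-- Linear word growth forces zero entropy. -/
lemma entTop_eq_zero_of_ncard_le {d : ℕ} (X : Set (FullShift d)) (c : ℕ) (hc : 0 < c)
    (h : ∀ n : ℕ, (langSet X (n + 1)).ncard ≤ c * (n + 1)) : entTop X = 0 := by
  refine le_antisymm ?_ (entTop_nonneg X)
  have hlog : Tendsto (fun n : ℕ => Real.log ((n : ℝ) + 1) / ((n : ℝ) + 1)) atTop (𝓝 0) :=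
    Real.isLittleO_log_id_atTop.tendsto_div_nhds_zero.comp
      (tendsto_atTop_add_const_right _ _ tendsto_natCast_atTop_atTop)
  have hlim : Tendsto (fun n : ℕ => (1 / (n + 1 : ℝ)) * Real.log c
      + Real.log ((n : ℝ) + 1) / ((n : ℝ) + 1)) atTop (𝓝 0) := by
    simpa using (tendsto_one_div_add_atTop_nhds_zero_nat.mul_const (Real.log c)).add hlog
  refine ge_of_tendsto' hlim fun n => (entTop_le X n).trans ?_
  have hc' : (0 : ℝ) < c := by exact_mod_cast hc
  have hn : (0 : ℝ) < (n : ℝ) + 1 := by positivity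
  have hle : Real.log ((langSet X (n + 1)).ncard : ℝ) ≤ Real.log c + Real.log ((n : ℝ) + 1) := by
    rw [← Real.log_mul hc'.ne' hn.ne']
    rcases Nat.eq_zero_or_pos (langSet X (n + 1)).ncard with h0 | h0
    · rw [h0, Nat.cast_zero, Real.log_zero]
      have : (1 : ℝ) ≤ ((c * (n + 1) : ℕ) : ℝ) := by
        exact_mod_cast Nat.mul_pos hc n.succ_pos
      push_cast at this
      exact Real.log_nonneg this
    · exact Real.log_le_log (by exact_mod_cast h0) (by exact_mod_cast h n)
  calc (1 / (n + 1 : ℝ)) * Real.log ((langSet X (n + 1)).ncard : ℝ)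
      ≤ (1 / (n + 1 : ℝ)) * (Real.log c + Real.log ((n : ℝ) + 1)) := by gcongr
    _ = _ := by ring

/-- The shift map as a homeomorphism of the full shift. -/
def shiftHomeomorph (d : ℕ) : FullShift d ≃ₜ FullShift d where
  toFun := shift d
  invFun x k := x (k - 1)
  left_inv x := by funext k; simp [shift]
  right_inv x := by funext k; simp [shift]
  continuous_toFun := by
    change Continuous fun (x : FullShift d) (k : ℤ) => x (k + 1)
    fun_prop
  continuous_invFun := by fun_prop

lemma langSet_closure {d : ℕ} (X : Set (FullShift d)) (n : ℕ) :
    langSet (closure X) n = langSet X n := by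
  ext w
  exact closure_inter_open_nonempty_iff (isOpen_cyl w)

lemma mem_langSet {d n : ℕ} {X : Set (FullShift d)} {w : Fin n → Fin d} :
    w ∈ langSet X n ↔ ∃ x ∈ X, ∀ i : Fin n, x ((i : ℕ) : ℤ) = w i :=
  Iff.rfl

/-- The words of length `j` are the prefixes of the words of any length `n ≥ j`. -/
lemma langSet_eq_image {d j n : ℕ} (X : Set (FullShift d)) (h : j ≤ n) :
    langSet X j = (fun v : Fin n → Fin d => v ∘ Fin.castLE h) '' langSet X n := by
  ext w
  simp only [Set.mem_image, mem_langSet]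
  constructor
  · rintro ⟨x, hx, hw⟩
    exact ⟨fun i => x ((i : ℕ) : ℤ), ⟨x, hx, fun _ => rfl⟩, funext hw⟩
  · rintro ⟨v, ⟨x, hx, hv⟩, rfl⟩
    exact ⟨x, hx, fun i => hv (Fin.castLE h i)⟩

/-- The bi-infinite path through `w` following `next` forwards and `prev` backwards. -/
def biPath {T : Type*} (next prev : T → T) (w : T) (k : ℤ) : T :=
  if 0 ≤ k then next^[k.toNat] w else prev^[(-k).toNat] w

section biPath

variable {T : Type*} (next prev : T → T) (w : T)

lemma biPath_natCast (m : ℕ) : biPath next prev w m = next^[m] w := by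
  simp [biPath]

lemma biPath_neg_natCast (m : ℕ) : biPath next prev w (-m) = prev^[m] w := by
  rcases m with _ | m
  · simp [biPath]
  · have h : ¬ (0 : ℤ) ≤ -((m + 1 : ℕ) : ℤ) := by omega
    rw [biPath, if_neg h, neg_neg, Int.toNat_natCast]

/-- Consecutive vertices of `biPath` are joined by `next` or by `prev`. -/
lemma biPath_step (k : ℤ) :
    biPath next prev w (k + 1) = next (biPath next prev w k) ∨
      biPath next prev w k = prev (biPath next prev w (k + 1)) := by
  rcases le_or_gt 0 k with hk | hk
  · left
    obtain ⟨m, rfl⟩ := Int.eq_ofNat_of_zero_le hk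
    rw [show ((m : ℤ) + 1) = ((m + 1 : ℕ) : ℤ) by push_cast; rfl, biPath_natCast, biPath_natCast,
      Function.iterate_succ_apply']
  · right
    obtain ⟨m, hm⟩ := Int.eq_ofNat_of_zero_le (show 0 ≤ -k - 1 by omega)
    rw [show k + 1 = -(m : ℤ) by omega, show k = -((m + 1 : ℕ) : ℤ) by push_cast; omega,
      biPath_neg_natCast, biPath_neg_natCast, Function.iterate_succ_apply']

/-- The label sequences of all `biPath`s have at most linearly many windows of each length. -/
lemma ncard_windows_biPath_le [Finite T] {α : Type*} (label : T → α) (n : ℕ) :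
    {v : Fin n → α | ∃ (w : T) (k : ℤ), ∀ i : Fin n,
      label (biPath next prev w (k + (i : ℕ))) = v i}.ncard ≤
        Nat.card T + (Nat.card T + Nat.card T * n) := by
  let F : T ⊕ (T ⊕ (T × Fin n)) → Fin n → α :=
    Sum.elim (fun v i => label (next^[i] v)) (Sum.elim (fun v i => label (prev^[n - i] v))
      (fun p i => label (biPath next prev p.1 (-((p.2 : ℕ) : ℤ) + (i : ℕ)))))
  have hsub : {v : Fin n → α | ∃ (w : T) (k : ℤ), ∀ i : Fin n,
      label (biPath next prev w (k + (i : ℕ))) = v i} ⊆ Set.range F := by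
    rintro v ⟨w, k, hv⟩
    rcases le_or_gt 0 k with hk | hk
    · obtain ⟨m, rfl⟩ := Int.eq_ofNat_of_zero_le hk
      refine ⟨Sum.inl (next^[m] w), funext fun i => ?_⟩
      rw [← hv i, ← Nat.cast_add, biPath_natCast, add_comm, Function.iterate_add_apply]
      rfl
    · rcases lt_or_ge (-k) n with hkn | hkn
      · obtain ⟨m, hm⟩ := Int.eq_ofNat_of_zero_le (show 0 ≤ -k by omega)
        refine ⟨Sum.inr (Sum.inr (w, ⟨m, by omega⟩)), funext fun i => ?_⟩
        obtain rfl : k = -(m : ℤ) := by omega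
        exact hv i
      · obtain ⟨m, hm⟩ := Int.eq_ofNat_of_zero_le (show 0 ≤ -k - n by omega)
        refine ⟨Sum.inr (Sum.inl (prev^[m] w)), funext fun i => ?_⟩
        rw [← hv i, show k + ((i : ℕ) : ℤ) = -(((n - i) + m : ℕ) : ℤ) by
          have := i.isLt
          omega, biPath_neg_natCast, Function.iterate_add_apply]
        rfl
  calc _ ≤ (Set.range F).ncard := Set.ncard_le_ncard hsub (Set.finite_range F)
    _ ≤ Nat.card (T ⊕ (T ⊕ (T × Fin n))) := Finite.card_range_le F
    _ = _ := by simp [Nat.card_sum, Nat.card_prod]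

end biPath

/-- If a set of words of length `M + 1` is extendable in both directions via `next` and `prev`, then
the vertex of `biPath` at `k` is the word read off from `k` onwards. -/
lemma biPath_window {d M : ℕ} {L : Set (Fin (M + 1) → Fin d)} {next prev : L → L}
    (hnext : ∀ (v : L) (i : Fin M), (next v).1 i.castSucc = v.1 i.succ)
    (hprev : ∀ (v : L) (i : Fin M), v.1 i.castSucc = (prev v).1 i.succ)
    (w : L) (i : ℕ) (hi : i < M + 1) (k : ℤ) :
    (biPath next prev w (k + i)).1 0 = (biPath next prev w k).1 ⟨i, hi⟩ := by
  induction i generalizing k with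
  | zero => simp
  | succ i ih =>
    have hstep : (biPath next prev w (k + 1)).1 ⟨i, by omega⟩
        = (biPath next prev w k).1 ⟨i + 1, hi⟩ := by
      rcases biPath_step next prev w k with h | h
      · rw [h]
        exact hnext _ ⟨i, by omega⟩
      · rw [h]
        exact hprev _ ⟨i, by omega⟩
    rw [← hstep, ← ih (by omega) (k + 1)]
    push_cast
    ring_nf

/-- Every shift space agrees up to any given word length with one of zero entropy. -/
lemma exists_isShiftSpace_entTop_eq_zero {d : ℕ} {X₀ : Set (FullShift d)}
    (hX₀ : IsShiftSpace X₀) (N : ℕ) :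
    ∃ X : Set (FullShift d), IsShiftSpace X ∧
      (∀ j : ℕ, j ≤ N → langSet X j = langSet X₀ j) ∧ entTop X = 0 := by
  obtain ⟨⟨x₀, hx₀⟩, -, hinv⟩ := hX₀
  set L : Set (Fin (N + 1) → Fin d) := langSet X₀ (N + 1)
  have hne : Nonempty L := ⟨⟨fun i => x₀ ((i : ℕ) : ℤ), x₀, hx₀, fun _ => rfl⟩⟩
  have hnext : ∀ v : L, ∃ v' : L, ∀ i : Fin N, v'.1 i.castSucc = v.1 i.succ := by
    rintro ⟨v, x, hx, hv⟩
    refine ⟨⟨fun i => shift d x ((i : ℕ) : ℤ), shift d x,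
      hinv ▸ Set.mem_image_of_mem _ hx, fun _ => rfl⟩, fun i => ?_⟩
    simpa [shift] using hv i.succ
  have hprev : ∀ v : L, ∃ v' : L, ∀ i : Fin N, v.1 i.castSucc = v'.1 i.succ := by
    rintro ⟨v, x, hx, hv⟩
    obtain ⟨z, hz, rfl⟩ : x ∈ shift d '' X₀ := hinv.symm ▸ hx
    refine ⟨⟨fun i => z ((i : ℕ) : ℤ), z, hz, fun _ => rfl⟩, fun i => ?_⟩
    simpa [shift] using (hv i.castSucc).symm
  choose next hnext using hnext
  choose prev hprev using hprev
  let Y : Set (FullShift d) :=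
    {x | ∃ (w : L) (k : ℤ), x = fun m => (biPath next prev w (k + m)).1 0}
  have hY : shift d '' Y = Y := by
    apply Set.Subset.antisymm
    · rintro _ ⟨_, ⟨w, k, rfl⟩, rfl⟩
      exact ⟨w, k + 1, funext fun m => by simp [shift, add_left_comm, add_comm]⟩
    · rintro _ ⟨w, k, rfl⟩
      exact ⟨_, ⟨w, k - 1, rfl⟩, funext fun m => by
        simp only [shift]
        ring_nf⟩
  have hlang : langSet (closure Y) (N + 1) = L := by
    rw [langSet_closure]
    ext v
    constructor
    · rintro ⟨_, ⟨w, k, rfl⟩, hv⟩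
      have : v = (biPath next prev w k).1 := funext fun i => by
        rw [← hv i]
        exact biPath_window hnext hprev w i i.isLt k
      exact this ▸ (biPath next prev w k).2
    · intro hv
      refine ⟨_, ⟨⟨v, hv⟩, 0, rfl⟩, fun i => ?_⟩
      refine (biPath_window hnext hprev ⟨v, hv⟩ i i.isLt 0).trans ?_
      simp [biPath]
  refine ⟨closure Y, ⟨?_, isClosed_closure, ?_⟩, fun j hj => ?_, ?_⟩
  · exact Set.Nonempty.closure ⟨_, hne.some, 0, rfl⟩
  · exact ((shiftHomeomorph d).image_closure Y).trans (congrArg closure hY)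
  · rw [langSet_eq_image (closure Y) (hj.trans N.le_succ), hlang,
      langSet_eq_image X₀ (hj.trans N.le_succ)]
  · refine entTop_eq_zero_of_ncard_le _ (3 * Nat.card L)
      (Nat.mul_pos three_pos Nat.card_pos) fun n => ?_
    rw [langSet_closure]
    have hsub : langSet Y (n + 1) ⊆ {v : Fin (n + 1) → Fin d | ∃ (w : L) (k : ℤ),
        ∀ i : Fin (n + 1), (biPath next prev w (k + (i : ℕ))).1 0 = v i} := by
      rintro v ⟨_, ⟨w, k, rfl⟩, hv⟩
      exact ⟨w, k, hv⟩
    refine (Set.ncard_le_ncard hsub (Set.toFinite _)).trans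
      ((ncard_windows_biPath_le next prev (fun v : L => v.1 0) (n + 1)).trans ?_)
    nlinarith [Nat.zero_le (Nat.card L * n)]

/-- the entropy map `X ↦ h_top(X)` is continuous at a shift space `X₀`
(with respect to the metric `d(X,Y) = 2^{−min{n : L(X,n) ≠ L(Y,n)}}`) if and only if
`h_top(X₀) = 0`. -/
theorem statement6 {d : ℕ} (hd : 2 ≤ d) (X₀ : Set (FullShift d)) (hX₀ : IsShiftSpace X₀) :
    (∀ ε : ℝ, 0 < ε → ∃ N : ℕ, ∀ X : Set (FullShift d), IsShiftSpace X →
        (∀ j : ℕ, j ≤ N → langSet X j = langSet X₀ j) → |entTop X - entTop X₀| < ε) ↔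
      entTop X₀ = 0 := by
  constructor
  · intro h
    by_contra hne
    obtain ⟨N, hN⟩ := h (entTop X₀) (lt_of_le_of_ne (entTop_nonneg X₀) (Ne.symm hne))
    obtain ⟨X, hX, hlang, hzero⟩ := exists_isShiftSpace_entTop_eq_zero hX₀ N
    have := hN X hX hlang
    rw [hzero, zero_sub, abs_neg] at this
    exact absurd (le_abs_self _) this.not_ge
  · intro h ε hε
    obtain ⟨n, hn⟩ := exists_lt_of_ciInf_lt (show entTop X₀ < ε by rwa [h])
    refine ⟨n + 1, fun X _ hlang => ?_⟩
    rw [h, sub_zero, abs_of_nonneg (entTop_nonneg X)]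
    refine (entTop_le X n).trans_lt ?_
    rwa [hlang (n + 1) le_rfl]

end PaperStmt
end
end

section
/- For every shift space X over the alphabet A and every n ∈ ℕ, there exists a shift space Z ⊆ Σ with L(Z,n) = L(X,n) such that the nonwandering set of Z is a finite union of periodic orbits; in particular h_top(Z) = 0. -/
open Filter MeasureTheory Topology
open scoped BigOperators ENNReal

noncomputable section

namespace PaperStmt

/-- The nonwandering set of the subshift `Z`. -/
def nonwanderingSet {d : ℕ} (Z : Set (FullShift d)) : Set (FullShift d) :=
  {x | x ∈ Z ∧ ∀ U : Set (FullShift d), IsOpen U → x ∈ U →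
    ∃ n : ℕ, 1 ≤ n ∧ ((shift d)^[n] '' (Z ∩ U) ∩ (Z ∩ U)).Nonempty}

/-- The `m`-th iterate of the shift, for an arbitrary integer `m`. -/
def translate {d : ℕ} (m : ℤ) (x : FullShift d) : FullShift d := fun k => x (k + m)

lemma translate_zero {d : ℕ} (x : FullShift d) : translate 0 x = x := by
  funext k; simp [translate]

lemma translate_translate {d : ℕ} (m n : ℤ) (x : FullShift d) :
    translate m (translate n x) = translate (m + n) x := by
  funext k; simp [translate, add_assoc]

lemma shift_eq_translate {d : ℕ} (x : FullShift d) : shift d x = translate 1 x := rfl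

lemma shift_iterate {d : ℕ} (j : ℕ) (x : FullShift d) :
    (shift d)^[j] x = translate j x := by
  induction j with
  | zero => simp [translate_zero]
  | succ j ih =>
    rw [Function.iterate_succ_apply', ih, shift_eq_translate, translate_translate]
    push_cast
    rw [add_comm]

lemma translate_mem {d : ℕ} {X : Set (FullShift d)} (hX : shift d '' X = X) (m : ℤ)
    {x : FullShift d} (hx : x ∈ X) : translate m x ∈ X := by
  induction m using Int.induction_on with
  | zero => rwa [translate_zero]
  | succ i ih =>
    rw [← hX]
    exact ⟨_, ih, by rw [shift_eq_translate, translate_translate, add_comm]⟩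
  | pred i ih =>
    rw [← hX] at ih
    obtain ⟨y, hy, hyx⟩ := ih
    have : translate (-(i : ℤ) - 1) x = y := by
      rw [show (-(i : ℤ) - 1) = -1 + -(i : ℤ) by ring, ← translate_translate, ← hyx,
        shift_eq_translate, translate_translate]
      exact translate_zero y
    rwa [this]

/-- The word of length `n` of `x` starting at position `k`. -/
def wordAt {d : ℕ} (n : ℕ) (x : FullShift d) (k : ℤ) : Fin n → Fin d :=
  fun i => x (k + (i : ℕ))

lemma wordAt_eq_iff {d n : ℕ} {x y : FullShift d} {k m : ℤ} :
    wordAt n x k = wordAt n y m ↔ ∀ i : ℕ, i < n → x (k + i) = y (m + i) :=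
  ⟨fun h i hi => congrFun h ⟨i, hi⟩, fun h => funext fun i => h i i.2⟩

lemma mem_cyl_iff {d n : ℕ} {x : FullShift d} {w : Fin n → Fin d} :
    x ∈ cyl w ↔ wordAt n x 0 = w := by
  simp [cyl, wordAt, funext_iff]

lemma wordAt_translate {d : ℕ} (n : ℕ) (x : FullShift d) (k m : ℤ) :
    wordAt n (translate m x) k = wordAt n x (k + m) := by
  funext i
  simp only [wordAt, translate]
  congr 1
  ring

/-- If reading `x` along `g` only ever jumps between occurrences of the same `n`-word, then
the `n`-words read are words of `x`. -/
lemma wordAt_comp {d n : ℕ} {x : FullShift d} {g : ℤ → ℤ}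
    (hg : ∀ k, wordAt n x (g (k + 1)) = wordAt n x (g k + 1)) (k : ℤ) :
    wordAt n (x ∘ g) k = wordAt n x (g k) := by
  have key : ∀ i j : ℕ, i + j < n → x (g (k + i) + j) = x (g k + i + j) := by
    intro i
    induction i with
    | zero => intro j _; simp
    | succ i ih =>
      intro j hij
      have h1 := wordAt_eq_iff.1 (hg (k + i)) j (by omega)
      have h2 := ih (j + 1) (by omega)
      push_cast at h2 ⊢
      rw [← add_assoc k, h1, show g (k + i) + 1 + (j : ℤ) = g (k + i) + (j + 1) by ring, h2]
      congr 1
      ring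
  rw [wordAt_eq_iff]
  intro i hi
  simpa using key i 0 (by omega)

/-- The representative of `k` in `[a, b)` modulo `b - a`. -/
def wrap (a b k : ℤ) : ℤ := a + (k - a) % (b - a)

lemma wrap_of_mem {a b k : ℤ} (hak : a ≤ k) (hkb : k < b) : wrap a b k = k := by
  rw [wrap, Int.emod_eq_of_lt (by omega) (by omega)]
  ring

lemma wrap_add_period (a b k : ℤ) : wrap a b (k + (b - a)) = wrap a b k := by
  rw [wrap, wrap, show k + (b - a) - a = k - a + (b - a) by ring, Int.add_emod_right]

lemma wrap_add_one {a b : ℤ} (hab : a < b) (k : ℤ) :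
    wrap a b (k + 1) = wrap a b k + 1 ∨ wrap a b (k + 1) = a ∧ wrap a b k + 1 = b := by
  have h0 := Int.emod_nonneg (k - a) (show b - a ≠ 0 by omega)
  have h1 := Int.emod_lt_of_pos (k - a) (show 0 < b - a by omega)
  have h2 : wrap a b (k + 1) = a + ((k - a) % (b - a) + 1) % (b - a) := by
    rw [wrap, Int.emod_add_emod]
    congr 2
    ring
  rw [h2, wrap]
  by_cases h : (k - a) % (b - a) + 1 < b - a
  · left
    rw [Int.emod_eq_of_lt (by omega) h]
    ring
  · right
    have h3 : (k - a) % (b - a) + 1 = b - a := by omega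
    rw [h3, Int.emod_self]
    omega

lemma wordAt_wrap_add_one {d n : ℕ} {x : FullShift d} {a b : ℤ} (hab : a < b)
    (hw : wordAt n x a = wordAt n x b) (k : ℤ) :
    wordAt n x (wrap a b (k + 1)) = wordAt n x (wrap a b k + 1) := by
  rcases wrap_add_one hab k with h | ⟨h1, h2⟩
  · rw [h]
  · rw [h1, h2, hw]

lemma finite_range_translate {d : ℕ} {x : FullShift d} {p : ℤ} (hp : 0 < p)
    (hx : translate p x = x) : (Set.range fun m : ℤ => translate m x).Finite := by
  refine ((Set.finite_Ico 0 p).image fun m : ℤ => translate m x).subset ?_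
  rintro _ ⟨m, rfl⟩
  have hmul : ∀ t : ℤ, translate (p * t) x = x := by
    intro t
    induction t using Int.induction_on with
    | zero => simp [translate_zero]
    | succ i ih => rw [mul_add, mul_one, ← translate_translate, hx, ih]
    | pred i ih =>
      conv_lhs => rw [← hx]
      rw [translate_translate, mul_sub, mul_one, sub_add_cancel, ih]
  refine ⟨m % p, ⟨Int.emod_nonneg _ hp.ne', Int.emod_lt_of_pos _ hp⟩, ?_⟩
  conv_rhs => rw [← Int.emod_add_mul_ediv m p]
  simp only [← translate_translate, hmul]

/-- Every point `x` has a companion `z` with the same central `n`-word, asymptotic in both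
directions to points with finite orbit, all of whose `n`-words are words of `x`. -/
lemma exists_biasymptotic {d : ℕ} (n : ℕ) (x : FullShift d) :
    ∃ z l r : FullShift d, ∃ D : ℕ,
      (Set.range fun m : ℤ => translate m l).Finite ∧
      (Set.range fun m : ℤ => translate m r).Finite ∧
      (∀ k : ℤ, D ≤ k → z k = r k) ∧ (∀ k : ℤ, k ≤ -D → z k = l k) ∧
      wordAt n z 0 = wordAt n x 0 ∧
      ∀ y ∈ ({z, l, r} : Set (FullShift d)), ∀ k, ∃ m, wordAt n y k = wordAt n x m := by
  have hright : ∃ a b : ℕ, a < b ∧ wordAt n x a = wordAt n x b := by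
    obtain ⟨i, j, hij, h⟩ :=
      Finite.exists_ne_map_eq_of_infinite fun k : ℕ => wordAt n x k
    rcases lt_or_gt_of_ne hij with hlt | hlt
    · exact ⟨i, j, hlt, h⟩
    · exact ⟨j, i, hlt, h.symm⟩
  have hleft : ∃ e c : ℕ, e < c ∧ wordAt n x (-c) = wordAt n x (-e) := by
    obtain ⟨i, j, hij, h⟩ :=
      Finite.exists_ne_map_eq_of_infinite fun k : ℕ => wordAt n x (-k)
    rcases lt_or_gt_of_ne hij with hlt | hlt
    · exact ⟨i, j, hlt, h.symm⟩
    · exact ⟨j, i, hlt, h⟩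
  obtain ⟨a, b, hab, hwr⟩ := hright
  obtain ⟨e, c, hec, hwl⟩ := hleft
  have hab' : (a : ℤ) < b := by exact_mod_cast hab
  have hce' : (-c : ℤ) < -e := by omega
  set g : ℤ → ℤ := fun k =>
    if k < -e then wrap (-c) (-e) k else if (a : ℤ) ≤ k then wrap a b k else k with hgdef
  have hg_mid : ∀ k : ℤ, -(e : ℤ) ≤ k → k ≤ a → g k = k := by
    intro k h1 h2
    simp only [hgdef, if_neg (not_lt.2 h1)]
    split_ifs with h
    · exact wrap_of_mem h (by omega)
    · rfl
  have hg_right : ∀ k : ℤ, (a : ℤ) ≤ k → g k = wrap a b k := by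
    intro k h
    simp only [hgdef, if_neg (show ¬ k < -(e : ℤ) by omega), if_pos h]
  have hg_left : ∀ k : ℤ, k < -(e : ℤ) → g k = wrap (-c) (-e) k := by
    intro k h
    simp only [hgdef, if_pos h]
  have hl := wordAt_wrap_add_one hce' hwl
  have hr := wordAt_wrap_add_one hab' hwr
  have hg : ∀ k, wordAt n x (g (k + 1)) = wordAt n x (g k + 1) := by
    intro k
    rcases lt_or_ge (k + 1) (-(e : ℤ)) with h1 | h1
    · rw [hg_left _ h1, hg_left k (by omega), hl]
    rcases le_or_gt (a : ℤ) k with h2 | h2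
    · rw [hg_right _ h2, hg_right (k + 1) (by omega), hr]
    rw [hg_mid (k + 1) h1 (by omega)]
    rcases lt_or_ge k (-(e : ℤ)) with h3 | h3
    · rw [hg_left k h3, wrap_of_mem (by omega) h3]
    · rw [hg_mid k h3 h2.le]
  have hper : ∀ s t : ℤ, translate (t - s) (x ∘ wrap s t) = x ∘ wrap s t := by
    intro s t
    funext k
    simp [translate, wrap_add_period]
  refine ⟨x ∘ g, x ∘ wrap (-c) (-e), x ∘ wrap a b, a + e + 1,
    finite_range_translate (sub_pos.2 hce') (hper _ _),
    finite_range_translate (sub_pos.2 hab') (hper _ _), ?_, ?_, ?_, ?_⟩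
  · intro k hk
    rw [Function.comp_apply, Function.comp_apply, hg_right k (by push_cast at hk; omega)]
  · intro k hk
    rw [Function.comp_apply, Function.comp_apply, hg_left k (by push_cast at hk; omega)]
  · rw [wordAt_comp hg, hg_mid 0 (by omega) (by omega)]
  · rintro y (rfl | rfl | rfl) k
    · exact ⟨_, wordAt_comp hg k⟩
    · exact ⟨_, wordAt_comp hl k⟩
    · exact ⟨_, wordAt_comp hr k⟩

lemma eventually_window_subset {d : ℕ} {U : Set (FullShift d)} (hU : IsOpen U)
    {p : FullShift d} (hp : p ∈ U) :
    ∀ᶠ K : ℕ in atTop, ∀ y : FullShift d, (∀ k : ℤ, |k| ≤ K → y k = p k) → y ∈ U := by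
  obtain ⟨I, u, hu, hsub⟩ := isOpen_pi_iff.1 hU p hp
  have hI : ∀ᶠ K : ℕ in atTop, ∀ k ∈ I, |k| ≤ (K : ℤ) := by
    rw [Filter.eventually_all_finset]
    intro k _
    filter_upwards [eventually_ge_atTop k.natAbs] with K hK
    rw [Int.abs_eq_natAbs]
    exact_mod_cast hK
  filter_upwards [hI] with K hK y hy
  refine hsub fun k hk => ?_
  rw [hy k (hK k hk)]
  exact (hu k hk).2

/-- `z` agrees with points of `P` far to the right and far to the left, with threshold `D`. -/
def IsBiasymptotic {d : ℕ} (P : Set (FullShift d)) (z : FullShift d) (D : ℕ) : Prop :=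
  (∃ r ∈ P, ∀ k : ℤ, D ≤ k → z k = r k) ∧ ∃ l ∈ P, ∀ k : ℤ, k ≤ -D → z k = l k

section Biasymptotic

variable {d : ℕ} {P : Set (FullShift d)} {ι : Type*} {z : ι → FullShift d} {D : ι → ℕ}

lemma IsBiasymptotic.finite_notMem {y : FullShift d} {N : ℕ} (hy : IsBiasymptotic P y N)
    (hfin : P.Finite) (hinv : ∀ m : ℤ, ∀ x ∈ P, translate m x ∈ P)
    {U : Set (FullShift d)} (hU : IsOpen U) (hPU : P ⊆ U) :
    {m : ℤ | translate m y ∉ U}.Finite := by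
  obtain ⟨K, hK⟩ := ((Filter.eventually_all_finite hfin).2 fun p hp =>
    eventually_window_subset hU (hPU hp)).exists
  obtain ⟨⟨r, hr, hzr⟩, l, hl, hzl⟩ := hy
  refine (Set.finite_Icc (-(N + K : ℤ)) (N + K)).subset fun m hm => ?_
  by_contra hout
  rw [Set.mem_Icc, not_and_or, not_le, not_le] at hout
  apply hm
  rcases hout with h | h
  · refine hK _ (hinv m l hl) _ fun k hk => hzl _ ?_
    have := abs_le.1 hk
    omega
  · refine hK _ (hinv m r hr) _ fun k hk => hzr _ ?_
    have := abs_le.1 hk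
    omega

/-- The union of `P` and the orbits of the points `z i`. -/
def orbitUnion (P : Set (FullShift d)) (z : ι → FullShift d) : Set (FullShift d) :=
  P ∪ ⋃ i, Set.range fun m : ℤ => translate m (z i)

lemma shift_image_orbitUnion (hinv : ∀ m : ℤ, ∀ x ∈ P, translate m x ∈ P) :
    shift d '' orbitUnion P z = orbitUnion P z := by
  have htr : ∀ m : ℤ, ∀ x ∈ orbitUnion P z, translate m x ∈ orbitUnion P z := by
    rintro m x (hx | hx)
    · exact Or.inl (hinv m x hx)
    · obtain ⟨i, k, rfl⟩ := Set.mem_iUnion.1 hx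
      exact Or.inr (Set.mem_iUnion.2 ⟨i, m + k, (translate_translate m k (z i)).symm⟩)
  refine Set.Subset.antisymm ?_ fun x hx => ⟨translate (-1) x, htr _ x hx, ?_⟩
  · rintro _ ⟨x, hx, rfl⟩
    exact htr 1 x hx
  · rw [shift_eq_translate, translate_translate]
    exact translate_zero x

lemma exists_isolating [Finite ι] (hfin : P.Finite)
    (hinv : ∀ m : ℤ, ∀ x ∈ P, translate m x ∈ P) (hz : ∀ i, IsBiasymptotic P (z i) (D i))
    {x : FullShift d} (hx : x ∉ P) :
    ∃ V : Set (FullShift d), IsOpen V ∧ x ∈ V ∧ orbitUnion P z ∩ V ⊆ {x} := by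
  obtain ⟨U, V, hU, hV, hPU, hxV, hdisj⟩ :=
    SeparatedNhds.of_isCompact_isCompact hfin.isCompact isCompact_singleton
      (Set.disjoint_singleton_right.2 hx)
  have hf : (orbitUnion P z ∩ V).Finite := by
    refine (Set.finite_iUnion fun i => (((hz i).finite_notMem hfin hinv hU hPU).image
      fun m : ℤ => translate m (z i))).subset ?_
    rintro y ⟨hy | hy, hyV⟩
    · exact (Set.disjoint_left.1 hdisj (hPU hy) hyV).elim
    · obtain ⟨i, m, rfl⟩ := Set.mem_iUnion.1 hy
      exact Set.mem_iUnion.2 ⟨i, m, fun h => Set.disjoint_left.1 hdisj h hyV, rfl⟩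
  refine ⟨V \ ((orbitUnion P z ∩ V) \ {x}), hV.sdiff (hf.subset Set.sdiff_subset).isClosed,
    ⟨hxV rfl, fun h => h.2 rfl⟩, ?_⟩
  rintro y ⟨hyZ, hyV, hy⟩
  by_contra hne
  exact hy ⟨⟨hyZ, hyV⟩, hne⟩

lemma isClosed_orbitUnion [Finite ι] (hfin : P.Finite)
    (hinv : ∀ m : ℤ, ∀ x ∈ P, translate m x ∈ P) (hz : ∀ i, IsBiasymptotic P (z i) (D i)) :
    IsClosed (orbitUnion P z) := by
  rw [← isOpen_compl_iff, isOpen_iff_mem_nhds]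
  intro x hx
  obtain ⟨V, hV, hxV, hsub⟩ := exists_isolating hfin hinv hz fun h => hx (Or.inl h)
  refine mem_of_superset (hV.mem_nhds hxV) fun y hyV hyZ => hx ?_
  rwa [← Set.mem_singleton_iff.1 (hsub ⟨hyZ, hyV⟩)]

lemma exists_period (hfin : P.Finite) (hinv : ∀ m : ℤ, ∀ x ∈ P, translate m x ∈ P)
    {x : FullShift d} (hx : x ∈ P) : ∃ ℓ : ℕ, IsPeriodicOf x ℓ := by
  have := hfin.to_subtype
  obtain ⟨i, j, hij, h⟩ := Finite.exists_ne_map_eq_of_infinite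
    fun m : ℕ => (⟨translate m x, hinv m x hx⟩ : P)
  have main : ∀ i j : ℕ, i < j → translate (i : ℤ) x = translate j x →
      ∃ ℓ : ℕ, IsPeriodicOf x ℓ := by
    intro i j hlt he
    refine ⟨j - i, by omega, ?_⟩
    rw [shift_iterate, Nat.cast_sub hlt.le, sub_eq_neg_add, ← translate_translate, ← he,
      translate_translate, neg_add_cancel, translate_zero]
  have he := congrArg Subtype.val h
  rcases lt_or_gt_of_ne hij with hlt | hlt
  · exact main i j hlt he
  · exact main j i hlt he.symm

lemma translate_mul_of_periodic {x : FullShift d} {ℓ : ℕ} (h : translate ℓ x = x) (t : ℕ) :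
    translate (t * ℓ : ℤ) x = x := by
  induction t with
  | zero => simp [translate_zero]
  | succ t ih =>
    rw [Nat.cast_succ, add_mul, one_mul, ← translate_translate, h, ih]

lemma nonwanderingSet_orbitUnion [Finite ι] (hfin : P.Finite)
    (hinv : ∀ m : ℤ, ∀ x ∈ P, translate m x ∈ P) (hz : ∀ i, IsBiasymptotic P (z i) (D i)) :
    nonwanderingSet (orbitUnion P z) = P := by
  refine Set.Subset.antisymm ?_ fun x hx => ⟨Or.inl hx, fun U _ hxU => ?_⟩
  · rintro x ⟨hxZ, hnw⟩
    by_contra hx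
    obtain ⟨V, hV, hxV, hsub⟩ := exists_isolating hfin hinv hz hx
    obtain ⟨ℓ, hℓ, _, ⟨y, hy, rfl⟩, hy'⟩ := hnw V hV hxV
    obtain rfl : y = x := hsub hy
    have hper : translate ℓ y = y := by
      rw [← shift_iterate]
      exact hsub hy'
    obtain ⟨i, m, rfl⟩ := Set.mem_iUnion.1 (hxZ.resolve_left hx)
    have hU := (hz i).finite_notMem hfin hinv (isOpen_compl_singleton)
      (Set.subset_compl_singleton_iff.2 hx)
    refine Set.infinite_of_injective_forall_mem (f := fun t : ℕ => (t * ℓ + m : ℤ)) ?_ ?_ hU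
    · intro s t hst
      have : ℓ ≠ 0 := by omega
      simpa [this] using hst
    · intro t
      have := translate_mul_of_periodic hper t
      rw [translate_translate] at this
      simpa using this
  · obtain ⟨ℓ, hℓ, hper⟩ := exists_period hfin hinv hx
    exact ⟨ℓ, hℓ, x, ⟨x, ⟨Or.inl hx, hxU⟩, hper⟩, Or.inl hx, hxU⟩

lemma langSet_eq_image_s7 (Z : Set (FullShift d)) (N : ℕ) :
    langSet Z N = (fun x => wordAt N x 0) '' Z := by
  ext w
  simp only [langSet, Set.mem_ofPred_eq, Set.Nonempty, Set.mem_inter_iff, mem_cyl_iff,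
    Set.mem_image]

lemma ncard_langSet_orbitUnion_le [Fintype ι] (hfin : P.Finite)
    (hinv : ∀ m : ℤ, ∀ x ∈ P, translate m x ∈ P) (hz : ∀ i, IsBiasymptotic P (z i) (D i))
    (N : ℕ) :
    (langSet (orbitUnion P z) N).ncard ≤ P.ncard + ∑ i, (N + 2 * D i + 1) := by
  classical
  set T : Finset (FullShift d) := hfin.toFinset ∪ Finset.univ.biUnion fun i =>
    (Finset.Icc (-(D i + N : ℤ)) (D i)).image fun m : ℤ => translate m (z i) with hT
  have hsub : langSet (orbitUnion P z) N ⊆ (T.image fun x => wordAt N x 0 : Finset _) := by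
    rw [langSet_eq_image_s7]
    rintro _ ⟨x, hx, rfl⟩
    rw [Finset.coe_image]
    rcases hx with hx | hx
    · exact ⟨x, by simp [hT, hx], rfl⟩
    obtain ⟨i, m, rfl⟩ := Set.mem_iUnion.1 hx
    obtain ⟨⟨r, hr, hzr⟩, l, hl, hzl⟩ := hz i
    by_cases hm : m ∈ Finset.Icc (-(D i + N : ℤ)) (D i)
    · refine ⟨translate m (z i), ?_, rfl⟩
      rw [hT, Finset.mem_coe, Finset.mem_union, Finset.mem_biUnion]
      exact Or.inr ⟨i, Finset.mem_univ i, Finset.mem_image_of_mem _ hm⟩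
    rw [Finset.mem_Icc, not_and_or, not_le, not_le] at hm
    rcases hm with h | h
    · refine ⟨translate m l, by simp [hT, hinv m l hl], wordAt_eq_iff.2 fun j hj => ?_⟩
      exact (hzl _ (by omega)).symm
    · refine ⟨translate m r, by simp [hT, hinv m r hr], wordAt_eq_iff.2 fun j hj => ?_⟩
      exact (hzr _ (by omega)).symm
  calc (langSet (orbitUnion P z) N).ncard
      ≤ (T.image fun x => wordAt N x 0).card := by
        rw [← Set.ncard_coe_finset]
        exact Set.ncard_le_ncard hsub (Finset.finite_toSet _)
    _ ≤ T.card := Finset.card_image_le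
    _ ≤ hfin.toFinset.card + ∑ i, (N + 2 * D i + 1) := by
        refine (Finset.card_union_le _ _).trans (Nat.add_le_add_left ?_ _)
        refine Finset.card_biUnion_le.trans (Finset.sum_le_sum fun i _ => ?_)
        refine Finset.card_image_le.trans ?_
        rw [Int.card_Icc]
        omega
    _ = P.ncard + ∑ i, (N + 2 * D i + 1) := by rw [Set.ncard_eq_toFinset_card P hfin]

end Biasymptotic

lemma entTop_eq_zero_of_linear_bound {d : ℕ} {Z : Set (FullShift d)} {A B : ℕ}
    (h : ∀ N, (langSet Z N).ncard ≤ A * N + B) : entTop Z = 0 := by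
  set u : ℕ → ℝ := fun N => (1 / (N + 1 : ℝ)) * Real.log ((langSet Z (N + 1)).ncard : ℝ)
  have hu0 : ∀ N, 0 ≤ u N := fun N =>
    mul_nonneg (by positivity) (Real.log_natCast_nonneg _)
  have hle : ∀ N : ℕ, u N ≤
      Real.log (A + B + 1) / ((N + 1 : ℕ) : ℝ) +
        Real.log ((N + 1 : ℕ) : ℝ) / ((N + 1 : ℕ) : ℝ) := by
    intro N
    have hN : (1 : ℝ) ≤ ((N + 1 : ℕ) : ℝ) := by exact_mod_cast Nat.succ_le_succ (Nat.zero_le N)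
    have hlog : Real.log ((langSet Z (N + 1)).ncard : ℝ) ≤
        Real.log (A + B + 1) + Real.log ((N + 1 : ℕ) : ℝ) := by
      rw [← Real.log_mul (by positivity) (by positivity)]
      rcases Nat.eq_zero_or_pos (langSet Z (N + 1)).ncard with h0 | hpos
      · rw [h0, Nat.cast_zero, Real.log_zero]
        have hA : (0 : ℝ) ≤ A := A.cast_nonneg
        have hB : (0 : ℝ) ≤ B := B.cast_nonneg
        exact Real.log_nonneg (one_le_mul_of_one_le_of_one_le (by linarith) hN)
      · refine Real.log_le_log (by exact_mod_cast hpos) ?_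
        have h1 : (langSet Z (N + 1)).ncard ≤ (A + B + 1) * (N + 1) :=
          (h (N + 1)).trans (by nlinarith [Nat.zero_le (B * N)])
        exact_mod_cast h1
    rw [← add_div, le_div_iff₀ (by positivity)]
    calc u N * ((N + 1 : ℕ) : ℝ) = Real.log ((langSet Z (N + 1)).ncard : ℝ) := by
          simp only [u]
          push_cast
          field_simp
      _ ≤ _ := hlog
  have hlim : Tendsto (fun N : ℕ => Real.log (A + B + 1) / ((N + 1 : ℕ) : ℝ) +
      Real.log ((N + 1 : ℕ) : ℝ) / ((N + 1 : ℕ) : ℝ)) atTop (𝓝 0) := by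
    have hcast : Tendsto (fun N : ℕ => ((N + 1 : ℕ) : ℝ)) atTop atTop :=
      tendsto_natCast_atTop_atTop.comp (tendsto_add_atTop_nat 1)
    have h2 := (Real.isLittleO_log_id_atTop.tendsto_div_nhds_zero).comp hcast
    simpa using (tendsto_const_nhds.div_atTop hcast).add h2
  refine le_antisymm (ge_of_tendsto' hlim fun N => ?_) (Real.iInf_nonneg hu0)
  exact (ciInf_le ⟨0, by rintro _ ⟨N, rfl⟩; exact hu0 N⟩ N).trans (hle N)

/-- for every shift space `X` and every `n` there is a shift space `Z`
with the same words of length `n` whose nonwandering set is a finite union of periodic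
orbits; in particular `h_top(Z) = 0`. -/
theorem statement7 {d : ℕ} (hd : 2 ≤ d) (X : Set (FullShift d)) (hX : IsShiftSpace X)
    (n : ℕ) :
    ∃ Z : Set (FullShift d), IsShiftSpace Z ∧ langSet Z n = langSet X n ∧
      (∃ F : Finset (FullShift d),
        (∀ y ∈ F, ∃ ℓ : ℕ, IsPeriodicOf y ℓ) ∧
        nonwanderingSet Z = ⋃ y ∈ F, Set.range fun j : ℕ => (shift d)^[j] y) ∧
      entTop Z = 0 := by
  classical
  have hword : ∀ w : langSet X n, ∃ x ∈ X, wordAt n x 0 = w := fun w => by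
    obtain ⟨x, hx, hw⟩ := w.2
    exact ⟨x, hx, mem_cyl_iff.1 hw⟩
  choose x hxX hxw using hword
  choose z l r D hl hr hzr hzl hz0 hlang using fun w => exists_biasymptotic n (x w)
  set P : Set (FullShift d) := ⋃ w, ((Set.range fun m : ℤ => translate m (l w)) ∪
    Set.range fun m : ℤ => translate m (r w))
  have hfin : P.Finite := Set.finite_iUnion fun w => (hl w).union (hr w)
  have hinv : ∀ m : ℤ, ∀ y ∈ P, translate m y ∈ P := by
    intro m y hy
    obtain ⟨w, ⟨k, rfl⟩ | ⟨k, rfl⟩⟩ := Set.mem_iUnion.1 hy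
    · exact Set.mem_iUnion.2 ⟨w, Or.inl ⟨m + k, (translate_translate _ _ _).symm⟩⟩
    · exact Set.mem_iUnion.2 ⟨w, Or.inr ⟨m + k, (translate_translate _ _ _).symm⟩⟩
  have hz : ∀ w, IsBiasymptotic P (z w) (D w) := fun w =>
    ⟨⟨r w, Set.mem_iUnion.2 ⟨w, Or.inr ⟨0, translate_zero _⟩⟩, hzr w⟩,
      l w, Set.mem_iUnion.2 ⟨w, Or.inl ⟨0, translate_zero _⟩⟩, hzl w⟩
  have hzZ : ∀ w, z w ∈ orbitUnion P z := fun w =>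
    Or.inr (Set.mem_iUnion.2 ⟨w, 0, translate_zero _⟩)
  refine ⟨orbitUnion P z, ⟨?_, isClosed_orbitUnion hfin hinv hz, shift_image_orbitUnion hinv⟩,
    ?_, ⟨hfin.toFinset, ?_, ?_⟩, ?_⟩
  · obtain ⟨y, hy⟩ := hX.1
    exact ⟨_, hzZ ⟨wordAt n y 0, y, hy, mem_cyl_iff.2 rfl⟩⟩
  · refine Set.Subset.antisymm ?_ fun w hw =>
      ⟨z ⟨w, hw⟩, hzZ _, mem_cyl_iff.2 ((hz0 _).trans (hxw _))⟩
    have hsub : ∀ w, ∀ y ∈ ({z w, l w, r w} : Set (FullShift d)), ∀ m : ℤ,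
        wordAt n (translate m y) 0 ∈ langSet X n := by
      intro w y hy m
      obtain ⟨k, hk⟩ := hlang w y hy (0 + m)
      refine ⟨translate k (x w), translate_mem hX.2.2 k (hxX w), mem_cyl_iff.2 ?_⟩
      rw [wordAt_translate, wordAt_translate, hk, zero_add]
    rw [langSet_eq_image_s7]
    rintro _ ⟨y, hy | hy, rfl⟩
    · obtain ⟨w, ⟨m, rfl⟩ | ⟨m, rfl⟩⟩ := Set.mem_iUnion.1 hy
      · exact hsub w _ (by simp) m
      · exact hsub w _ (by simp) m
    · obtain ⟨w, m, rfl⟩ := Set.mem_iUnion.1 hy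
      exact hsub w _ (by simp) m
  · intro y hy
    exact exists_period hfin hinv (hfin.mem_toFinset.1 hy)
  · rw [nonwanderingSet_orbitUnion hfin hinv hz]
    ext y
    simp only [Set.Finite.mem_toFinset, Set.mem_iUnion, Set.mem_range, exists_prop]
    constructor
    · exact fun hy => ⟨y, hy, 0, rfl⟩
    · rintro ⟨y', hy', j, rfl⟩
      rw [shift_iterate]
      exact hinv j y' hy'
  · refine entTop_eq_zero_of_linear_bound (A := Fintype.card (langSet X n))
      (B := P.ncard + ∑ w, (2 * D w + 1)) fun N => ?_
    refine (ncard_langSet_orbitUnion_le hfin hinv hz N).trans (le_of_eq ?_)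
    simp only [add_assoc, Finset.sum_add_distrib, Finset.sum_const, Finset.card_univ,
      smul_eq_mul]
    ring

end PaperStmt
end
end

section
/- Let d ≥ 1, let S_0,…,S_{d−1} ⊆ ℕ₀ be nonempty, and let Π ⊆ 𝔖_d be nonempty. Then the generalized gap shift X = X_{S_0,…,S_{d−1},Π} is a coded shift and G = { σ(0)^{s_{σ(0)}} ⋯ σ(d−1)^{s_{σ(d−1)}} d : σ ∈ Π, s_{σ(j)} ∈ S_{σ(j)} } is a unique representation of X: every x ∈ X_seq admits exactly one parsing as a bi-infinite concatenation of words of G. -/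
open Filter MeasureTheory Topology
open scoped BigOperators ENNReal

noncomputable section

namespace PaperStmt

/-- The generator word `σ(0)^{s_{σ(0)}} σ(1)^{s_{σ(1)}} ⋯ σ(d−1)^{s_{σ(d−1)}} d`
over the alphabet `{0,…,d} = Fin (d+1)`. -/
def gapGen (d : ℕ) (σ : Equiv.Perm (Fin d)) (s : Fin d → ℕ) : List (Fin (d + 1)) :=
  (List.ofFn fun j : Fin d => List.replicate (s (σ j)) (Fin.castSucc (σ j))).flatten
    ++ [Fin.last d]

/-- The generating set of the generalized gap shift `X_{S_0,…,S_{d−1},Π}`. -/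
def gapGens (d : ℕ) (S : Fin d → Set ℕ) (P : Set (Equiv.Perm (Fin d))) :
    Set (List (Fin (d + 1))) :=
  {g | ∃ σ ∈ P, ∃ s : Fin d → ℕ, (∀ j, s j ∈ S j) ∧ g = gapGen d σ s}

/-- The constant bi-infinite sequence `a^∞`. -/
def constSeq {d : ℕ} (a : Fin d) : FullShift d := fun _ => a

/-- The finite segment `x_a x_{a+1} ⋯ x_{a+n-1}` of `x`, as a list. -/
def segList {d : ℕ} (x : FullShift d) (a : ℤ) (n : ℕ) : List (Fin d) :=
  List.ofFn fun t : Fin n => x (a + (t : ℕ))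

/-- `w` is a (nonempty) finite concatenation `g_{ℓ_1}⋯g_{ℓ_k}` of generators of `𝒢`. -/
def IsConcat {d : ℕ} (𝒢 : Set (List (Fin d))) (w : List (Fin d)) : Prop :=
  ∃ L : List (List (Fin d)), L ≠ [] ∧ (∀ g ∈ L, g ∈ 𝒢) ∧ w = L.flatten

/-- `x` is a right-infinite concatenation `g_{ℓ_1} g_{ℓ_2} g_{ℓ_3} ⋯` of generators
of `𝒢`, starting at position `a`. -/
def RightParsingFrom {d : ℕ} (𝒢 : Set (List (Fin d))) (x : FullShift d) (a : ℤ) : Prop :=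
  ∃ p : ℕ → ℤ, p 0 = a ∧ StrictMono p ∧ ∀ j : ℕ, ∃ g ∈ 𝒢,
    p (j + 1) = p j + g.length ∧ ∀ (l : ℕ) (hl : l < g.length), x (p j + l) = g[l]

/-- `x` is a left-infinite concatenation `⋯ g_{ℓ_3} g_{ℓ_2} g_{ℓ_1}` of generators
of `𝒢`, ending at position `b` (exclusive). -/
def LeftParsingTo {d : ℕ} (𝒢 : Set (List (Fin d))) (x : FullShift d) (b : ℤ) : Prop :=
  ∃ p : ℕ → ℤ, p 0 = b ∧ StrictAnti p ∧ ∀ j : ℕ, ∃ g ∈ 𝒢,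
    p j = p (j + 1) + g.length ∧ ∀ (l : ℕ) (hl : l < g.length), x (p (j + 1) + l) = g[l]

/-- Strictly monotone integer sequences grow at least linearly. -/
lemma sub_le_sub_of_strictMono {p : ℤ → ℤ} (hp : StrictMono p) {i j : ℤ} (hij : i ≤ j) :
    j - i ≤ p j - p i := by
  induction j, hij using Int.leInduction with
  | base => simp
  | succ k _ ih =>
    have := hp (show k < k + 1 by lia)
    lia

/-- The values of a strictly monotone integer sequence cut `ℤ` into half-open intervals. -/
lemma exists_le_lt_succ_of_strictMono {p : ℤ → ℤ} (hp : StrictMono p) (m : ℤ) :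
    ∃ j, p j ≤ m ∧ m < p (j + 1) := by
  obtain ⟨j, hj, hmax⟩ := Int.exists_greatest_of_bdd (P := fun j => p j ≤ m)
    ⟨max 0 (m - p 0), fun z hz => by
      rcases le_total z 0 with h | h
      · exact h.trans (le_max_left _ _)
      · have := sub_le_sub_of_strictMono hp h
        exact le_trans (by lia) (le_max_right _ _)⟩
    ⟨min 0 (m - p 0), by
      have := sub_le_sub_of_strictMono hp (min_le_left 0 (m - p 0))
      have := min_le_right 0 (m - p 0)
      lia⟩
  refine ⟨j, hj, ?_⟩
  by_contra! h
  have := hmax _ h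
  lia

/-- If the letter `a` occurs in each generator exactly once, as its final letter, then the cut
points of a parsing of `x` are the positions following an occurrence of `a` in `x`. -/
lemma IsParsing.range_eq {n : ℕ} {𝒢 : Set (List (Fin n))} {a : Fin n}
    (h𝒢 : ∀ g ∈ 𝒢, ∃ w, a ∉ w ∧ g = w ++ [a]) {x : FullShift n} {p : ℤ → ℤ}
    (hp : IsParsing 𝒢 x p) : Set.range p = {k | x (k - 1) = a} := by
  obtain ⟨hmono, hblock⟩ := hp
  ext k
  constructor
  · rintro ⟨j, rfl⟩
    obtain ⟨g, hg, hlen, hx⟩ := hblock (j - 1)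
    obtain ⟨w, -, rfl⟩ := h𝒢 g hg
    have hlast := hx w.length (by simp)
    simp only [sub_add_cancel, List.length_append, List.length_singleton, Nat.cast_add,
      Nat.cast_one] at hlen
    rw [show p (j - 1) + (w.length : ℤ) = p j - 1 by lia] at hlast
    simpa using hlast
  · intro hk
    obtain ⟨j, hle, hlt⟩ := exists_le_lt_succ_of_strictMono hmono (k - 1)
    obtain ⟨g, hg, hlen, hx⟩ := hblock j
    obtain ⟨w, hw, rfl⟩ := h𝒢 g hg
    simp only [List.length_append, List.length_singleton, Nat.cast_add, Nat.cast_one] at hlen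
    obtain ⟨l, hl⟩ := Int.le.dest hle
    have hletter := hx l (by simp; lia)
    rw [hl, show x (k - 1) = a from hk] at hletter
    refine ⟨j + 1, ?_⟩
    rcases lt_or_ge l w.length with h | h
    · rw [List.getElem_append_left h] at hletter
      exact absurd (hletter ▸ List.getElem_mem h) hw
    · lia

/-- Generators of the gap shift end with their only occurrence of the letter `d`. -/
lemma exists_eq_append_last_of_mem_gapGens {d : ℕ} {S : Fin d → Set ℕ}
    {P : Set (Equiv.Perm (Fin d))} {g : List (Fin (d + 1))} (hg : g ∈ gapGens d S P) :
    ∃ w, Fin.last d ∉ w ∧ g = w ++ [Fin.last d] := by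
  obtain ⟨σ, -, s, -, rfl⟩ := hg
  refine ⟨_, ?_, rfl⟩
  simp only [List.mem_flatten, List.mem_ofFn]
  rintro ⟨_, ⟨j, rfl⟩, hmem⟩
  exact (Fin.castSucc_lt_last (σ j)).ne (List.eq_of_mem_replicate hmem).symm

/-- the generalized gap shift is a coded shift (its generators are
nonempty words) and its generating set is a unique representation: every
`x ∈ X_seq` admits exactly one parsing into generator blocks. -/
theorem statement10 (d : ℕ) (hd : 1 ≤ d) (S : Fin d → Set ℕ) (hS : ∀ i, (S i).Nonempty)
    (P : Set (Equiv.Perm (Fin d))) (hP : P.Nonempty) :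
    (∀ g ∈ gapGens d S P, g ≠ []) ∧ UniqueRep (gapGens d S P) := by
  refine ⟨fun g hg => ?_, fun x p q hp hq => ?_⟩
  · obtain ⟨w, -, rfl⟩ := exists_eq_append_last_of_mem_gapGens hg
    simp
  · rw [hp.range_eq fun _ => exists_eq_append_last_of_mem_gapGens,
      hq.range_eq fun _ => exists_eq_append_last_of_mem_gapGens]

end PaperStmt
end
end

section
/- Let X = X_{S_0,…,S_{d−1},Π} be a generalized gap shift with I = {i : S_i infinite} nonempty. Then the ergodic f-invariant Borel probability measures μ on X with μ(X_lim) = 1 are exactly the Dirac measures δ_{i^∞} concentrated on the fixed points i^∞, i ∈ I. -/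
open Filter MeasureTheory Topology
open scoped BigOperators ENNReal

noncomputable section

namespace PaperStmt

section Generators

variable {d : ℕ} (σ : Equiv.Perm (Fin d)) (s : Fin d → ℕ)

/-- The letters of a gap generator before its final letter, listed block by block. -/
def gapBody : List (Fin (d + 1)) :=
  (List.ofFn fun j : Fin d => List.replicate (s (σ j)) (Fin.castSucc (σ j))).flatten

lemma gapGen_eq : gapGen d σ s = gapBody σ s ++ [Fin.last d] := rfl

lemma length_gapGen : (gapGen d σ s).length = (gapBody σ s).length + 1 := by
  simp [gapGen_eq]

lemma getElem_gapGen_eq_last {l : ℕ} (hl : l < (gapGen d σ s).length)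
    (h : l = (gapBody σ s).length) : (gapGen d σ s)[l] = Fin.last d := by
  subst h
  simp [gapGen_eq]

lemma getElem_gapGen_of_lt {l : ℕ} (hl : l < (gapGen d σ s).length)
    (h : l < (gapBody σ s).length) : (gapGen d σ s)[l] = (gapBody σ s)[l] := by
  simp [gapGen_eq, List.getElem_append_left h]

lemma ne_last_of_mem_gapBody {a : Fin (d + 1)} (h : a ∈ gapBody σ s) : a ≠ Fin.last d := by
  simp only [gapBody, List.mem_flatten, List.mem_ofFn] at h
  obtain ⟨_, ⟨j, rfl⟩, ha⟩ := h
  rw [List.eq_of_mem_replicate ha]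
  exact (Fin.castSucc_lt_last _).ne

lemma getElem_gapGen_eq_last_iff {l : ℕ} (hl : l < (gapGen d σ s).length) :
    (gapGen d σ s)[l] = Fin.last d ↔ l = (gapBody σ s).length := by
  refine ⟨fun h => ?_, getElem_gapGen_eq_last σ s hl⟩
  by_contra hne
  have hlt : l < (gapBody σ s).length := by
    rw [length_gapGen] at hl
    omega
  rw [getElem_gapGen_of_lt σ s hl hlt] at h
  exact ne_last_of_mem_gapBody σ s (List.getElem_mem hlt) h

lemma pairwise_gapBody :
    (gapBody σ s).Pairwise fun a b =>
      ∃ i j, i ≤ j ∧ a = Fin.castSucc (σ i) ∧ b = Fin.castSucc (σ j) := by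
  rw [gapBody, List.pairwise_flatten]
  constructor
  · simp only [List.mem_ofFn]
    rintro _ ⟨j, rfl⟩
    exact List.pairwise_replicate.2 (Or.inr ⟨j, j, le_rfl, rfl, rfl⟩)
  · rw [List.pairwise_ofFn]
    intro i j hij a ha b hb
    exact ⟨i, j, hij.le, List.eq_of_mem_replicate ha, List.eq_of_mem_replicate hb⟩

/-- Each letter occupies an interval of positions in the body of a gap generator. -/
lemma getElem_gapBody_convex {l m n : ℕ} (hlm : l < m) (hmn : m < n)
    (hn : n < (gapBody σ s).length)
    (h : (gapBody σ s)[l] = (gapBody σ s)[n]) : (gapBody σ s)[m] = (gapBody σ s)[l] := by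
  have key := List.pairwise_iff_getElem.1 (pairwise_gapBody σ s)
  obtain ⟨i, j, hij, hi, hj⟩ := key l m (by omega) (by omega) hlm
  obtain ⟨j', k, hjk, hj', hk⟩ := key m n (by omega) hn hmn
  have h₁ : j = j' := σ.injective (Fin.castSucc_injective _ (hj.symm.trans hj'))
  have h₂ : i = k := σ.injective (Fin.castSucc_injective _ (hi.symm.trans (h.trans hk)))
  have h₃ : j = i := le_antisymm (h₁ ▸ h₂ ▸ hjk) hij
  rw [hj, hi, h₃]

lemma count_gapBody (i : Fin d) : (gapBody σ s).count (Fin.castSucc i) = s i := by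
  simp only [gapBody, List.count_flatten, List.map_ofFn, List.sum_ofFn, Function.comp_apply,
    List.count_replicate]
  rw [Finset.sum_eq_single (σ.symm i)]
  · simp
  · intro j _ hj
    have : σ j ≠ i := fun h => hj (by simp [← h])
    simp [this]
  · simp

lemma exists_gapGen_eq_append (i : Fin d) :
    ∃ u v, gapGen d σ s = u ++ List.replicate (s i) (Fin.castSucc i) ++ v := by
  have h : List.replicate (s i) (Fin.castSucc i) ∈
      List.ofFn fun j : Fin d => List.replicate (s (σ j)) (Fin.castSucc (σ j)) :=
    List.mem_ofFn.2 ⟨σ.symm i, by simp⟩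
  obtain ⟨u, v, huv⟩ := List.append_of_mem h
  refine ⟨u.flatten, v.flatten ++ [Fin.last d], ?_⟩
  simp [gapGen_eq, gapBody, huv]

end Generators

lemma le_count_of_getElem_eq {α : Type*} [DecidableEq α] {L : List α} {c : α} {l n : ℕ}
    (hn : l + n ≤ L.length) (h : ∀ t (ht : t < n), L[l + t] = c) : n ≤ L.count c := by
  have hrep : (L.drop l).take n = List.replicate n c := by
    refine List.ext_getElem (by simp; omega) fun t h₁ h₂ => ?_
    simp only [List.length_replicate] at h₂
    simpa using h t h₂
  calc n = ((L.drop l).take n).count c := by rw [hrep, List.count_replicate_self]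
    _ ≤ L.count c := ((List.take_sublist _ _).trans (List.drop_sublist _ _)).count_le _

/-- A strictly monotone sequence of integers cuts `ℤ` into intervals covering every point. -/
lemma exists_le_lt_of_strictMono {p : ℤ → ℤ} (hp : StrictMono p) (n : ℤ) :
    ∃ j, p j ≤ n ∧ n < p (j + 1) := by
  have habove : ∃ b, n < p b := by
    by_contra! h
    exact hp.not_bddAbove_range_of_isSuccArchimedean ⟨n, by rintro _ ⟨b, rfl⟩; exact h b⟩
  have hbelow : ∃ a, p a ≤ n := by
    by_contra! h
    exact hp.not_bddBelow_range_of_isPredArchimedean ⟨n, by rintro _ ⟨b, rfl⟩; exact (h b).le⟩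
  obtain ⟨b, hb⟩ := habove
  obtain ⟨j, hj, hmax⟩ := Int.exists_greatest_of_bdd (P := fun j => p j ≤ n)
    ⟨b, fun z hz => (hp.lt_iff_lt.1 (hz.trans_lt hb)).le⟩ hbelow
  refine ⟨j, hj, ?_⟩
  by_contra! h
  have := hmax _ h
  omega

section Words

variable {d : ℕ} {S : Fin d → Set ℕ} {P : Set (Equiv.Perm (Fin d))} {y : FullShift (d + 1)}

/-- Every position of a point of `X_seq` lies in a generator preceded by the last letter. -/
lemma exists_gapGen_at (hy : y ∈ Xseq (gapGens d S P)) (n : ℤ) :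
    ∃ q : ℤ, ∃ σ ∈ P, ∃ s : Fin d → ℕ, (∀ j, s j ∈ S j) ∧ q ≤ n ∧
      n ≤ q + (gapBody σ s).length ∧ y (q - 1) = Fin.last d ∧
      ∀ (l : ℕ) (hl : l < (gapGen d σ s).length), y (q + l) = (gapGen d σ s)[l] := by
  obtain ⟨p, hp, hblock⟩ := hy
  obtain ⟨j, hj, hj'⟩ := exists_le_lt_of_strictMono hp n
  obtain ⟨_, ⟨σ, hσ, s, hs, rfl⟩, hlen, hg⟩ := hblock j
  obtain ⟨_, ⟨τ, -, t, -, rfl⟩, hlen', hg'⟩ := hblock (j - 1)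
  rw [length_gapGen] at hlen hlen'
  rw [sub_add_cancel] at hlen'
  push_cast at hlen hlen'
  refine ⟨p j, σ, hσ, s, hs, hj, by omega, ?_, hg⟩
  have := hg' (gapBody τ t).length (by rw [length_gapGen]; omega)
  rw [getElem_gapGen_eq_last τ t _ rfl] at this
  rw [← this]
  congr 1
  omega

/-- Two consecutive occurrences of the last letter enclose a generator. -/
lemma exists_gapGen_between (hy : y ∈ Xseq (gapGens d S P)) {a b : ℤ} (hab : a < b)
    (ha : y a = Fin.last d) (hb : y b = Fin.last d)
    (hne : ∀ k, a < k → k < b → y k ≠ Fin.last d) :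
    ∃ g ∈ gapGens d S P, b = a + g.length ∧
      ∀ (l : ℕ) (hl : l < g.length), y (a + 1 + l) = g[l] := by
  obtain ⟨q, σ, hσ, s, hs, hq, hq', hlast, hg⟩ := exists_gapGen_at hy b
  have position {k : ℤ} (hk : y k = Fin.last d) (h₁ : q ≤ k)
      (h₂ : k ≤ q + (gapBody σ s).length) : k = q + (gapBody σ s).length := by
    obtain ⟨l, rfl⟩ := Int.le.dest h₁
    have hl : l < (gapGen d σ s).length := by
      rw [length_gapGen]
      omega
    rw [hg l hl, getElem_gapGen_eq_last_iff] at hk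
    omega
  have hbq := position hb hq hq'
  have h₁ : q - 1 ≤ a := by
    by_contra! h
    exact hne _ h (by omega) hlast
  have h₂ : a = q - 1 := by
    by_contra h
    have := position ha (by omega) (by omega)
    omega
  subst h₂
  refine ⟨_, ⟨σ, hσ, s, hs, rfl⟩, ?_, ?_⟩
  · rw [length_gapGen]
    push_cast
    omega
  · simpa using hg

/-- A word without the last letter occurs inside the body of a generator. -/
lemma exists_gapBody_of_ne_last (hy : y ∈ Xseq (gapGens d S P)) {a b : ℤ}
    (hne : ∀ k, a ≤ k → k ≤ b → y k ≠ Fin.last d) :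
    ∃ q : ℤ, ∃ σ ∈ P, ∃ s : Fin d → ℕ, (∀ j, s j ∈ S j) ∧ q ≤ a ∧
      b < q + (gapBody σ s).length ∧
      ∀ (l : ℕ) (hl : l < (gapBody σ s).length), y (q + l) = (gapBody σ s)[l] := by
  obtain ⟨q, σ, hσ, s, hs, hq, hq', -, hg⟩ := exists_gapGen_at hy a
  refine ⟨q, σ, hσ, s, hs, hq, ?_, fun l hl => ?_⟩
  · by_contra! h
    refine hne _ hq' h ?_
    rw [hg _ (by rw [length_gapGen]; omega), getElem_gapGen_eq_last _ _ _ rfl]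
  · rw [hg l (by rw [length_gapGen]; omega), getElem_gapGen_of_lt σ s _ hl]

lemma convex_of_ne_last (hy : y ∈ Xseq (gapGens d S P)) {a b c : ℤ} (hab : a < b) (hbc : b < c)
    (hne : ∀ k, a ≤ k → k ≤ c → y k ≠ Fin.last d) (h : y a = y c) : y b = y a := by
  obtain ⟨q, σ, -, s, -, hq, hq', hg⟩ := exists_gapBody_of_ne_last hy hne
  obtain ⟨l, rfl⟩ := Int.le.dest hq
  obtain ⟨m, rfl⟩ := Int.le.dest (hq.trans hab.le)
  obtain ⟨n, rfl⟩ := Int.le.dest (hq.trans (hab.trans hbc).le)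
  rw [hg l (by omega), hg n (by omega)] at h
  rw [hg l (by omega), hg m (by omega)]
  exact getElem_gapBody_convex σ s (by omega) (by omega) (by omega) h

lemma exists_le_mem_of_run (hy : y ∈ Xseq (gapGens d S P)) {i : Fin d} {a : ℤ} {n : ℕ}
    (h : ∀ k, a ≤ k → k ≤ a + n → y k = Fin.castSucc i) : ∃ m ∈ S i, n < m := by
  obtain ⟨q, σ, -, s, hs, hq, hq', hg⟩ := exists_gapBody_of_ne_last hy
    fun k h₁ h₂ => by
      rw [h k h₁ h₂]; exact (Fin.castSucc_lt_last _).ne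
  refine ⟨s i, hs i, ?_⟩
  obtain ⟨l, rfl⟩ := Int.le.dest hq
  rw [← count_gapBody σ s i]
  refine le_count_of_getElem_eq (l := l) (n := n + 1) (by omega) fun t ht => ?_
  rw [← hg (l + t) (by omega)]
  exact h _ (by push_cast; omega) (by push_cast; omega)

end Words

lemma mem_closure_iff_forall_window {d : ℕ} {A : Set (FullShift d)} {x : FullShift d} :
    x ∈ closure A ↔ ∀ n : ℕ, ∃ y ∈ A, ∀ k : ℤ, k.natAbs ≤ n → y k = x k := by
  constructor
  · intro hx n
    have hopen : IsOpen {y : FullShift d | ∀ k ∈ Finset.Icc (-n : ℤ) n, y k = x k} := by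
      have : {y : FullShift d | ∀ k ∈ Finset.Icc (-n : ℤ) n, y k = x k} =
          ⋂ k ∈ Finset.Icc (-n : ℤ) n, (fun y : FullShift d => y k) ⁻¹' {x k} := by
        ext y
        simp
      rw [this]
      exact isOpen_biInter_finset fun k _ =>
        (isOpen_discrete _).preimage (continuous_apply (A := fun _ : ℤ => Fin d) k)
    obtain ⟨y, hy, hyA⟩ := mem_closure_iff.1 hx _ hopen fun _ _ => rfl
    exact ⟨y, hyA, fun k hk => hy k (Finset.mem_Icc.2 (by omega))⟩
  · intro h
    choose y hyA hy using h
    refine mem_closure_of_tendsto (b := atTop) (f := y) ?_ (Eventually.of_forall hyA)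
    refine tendsto_pi_nhds.2 fun k => tendsto_nhds_of_eventually_eq ?_
    filter_upwards [eventually_ge_atTop k.natAbs] with n hn
    exact hy n k hn

/-- A point of a generalized gap shift in which the last letter recurs in both directions
is a bi-infinite concatenation of generators. -/
lemma mem_Xseq_of_recurrent_last {d : ℕ} {S : Fin d → Set ℕ} {P : Set (Equiv.Perm (Fin d))}
    {x : FullShift (d + 1)} (hx : x ∈ codedShift (gapGens d S P))
    (hright : ∀ m, ∃ n ≥ m, x n = Fin.last d) (hleft : ∀ m, ∃ n ≤ m, x n = Fin.last d) :
    x ∈ Xseq (gapGens d S P) := by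
  let T := {k : ℤ // x k = Fin.last d}
  let _ : LocallyFiniteOrder T := inferInstanceAs (LocallyFiniteOrder (Subtype _))
  let _ : SuccOrder T := LinearLocallyFiniteOrder.succOrder T
  let _ : PredOrder T := LinearLocallyFiniteOrder.predOrder T
  have : Nonempty T := (hright 0).elim fun n hn => ⟨⟨n, hn.2⟩⟩
  have : NoMaxOrder T := ⟨fun t => by
    obtain ⟨n, hn, hxn⟩ := hright (t.1 + 1)
    exact ⟨⟨n, hxn⟩, Subtype.coe_lt_coe.1 (show t.1 < n by omega)⟩⟩
  have : NoMinOrder T := ⟨fun t => by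
    obtain ⟨n, hn, hxn⟩ := hleft (t.1 - 1)
    exact ⟨⟨n, hxn⟩, Subtype.coe_lt_coe.1 (show n < t.1 by omega)⟩⟩
  let e : T ≃o ℤ := orderIsoIntOfLinearSuccPredArch
  have hmono : StrictMono fun j => (e.symm j).1 := fun _ _ h => e.symm.strictMono h
  refine ⟨fun j => (e.symm j).1 + 1, fun _ _ h => by have := hmono h; simpa using this,
    fun j => ?_⟩
  set a := (e.symm j).1 with ha
  set b := (e.symm (j + 1)).1 with hb
  have hab : a < b := hmono (lt_add_one j)
  have hgap : ∀ k, a < k → k < b → x k ≠ Fin.last d := by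
    intro k hak hkb hk
    have h₁ : j < e ⟨k, hk⟩ := e.symm_apply_lt.1 (Subtype.coe_lt_coe.1 hak)
    have h₂ : e ⟨k, hk⟩ < j + 1 := e.lt_symm_apply.1 (Subtype.coe_lt_coe.1 hkb)
    omega
  obtain ⟨y, hy, hyx⟩ := mem_closure_iff_forall_window.1 hx (a.natAbs + b.natAbs)
  have hwin : ∀ k, a ≤ k → k ≤ b → y k = x k := fun k _ _ => hyx k (by omega)
  obtain ⟨g, hg, hlen, hgy⟩ := exists_gapGen_between hy hab
    ((hwin a le_rfl hab.le).trans (e.symm j).2)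
    ((hwin b hab.le le_rfl).trans (e.symm (j + 1)).2)
    fun k h₁ h₂ => by rw [hwin k h₁.le h₂.le]; exact hgap k h₁ h₂
  refine ⟨g, hg, by simp only; omega, fun l hl => ?_⟩
  rw [← hgy l hl, hwin _ (by omega) (by omega)]

/-- A limit point of a generalized gap shift each of whose letters recurs in both directions
is constant, with a letter admitting arbitrarily long runs. -/
lemma eq_constSeq_of_recurrent {d : ℕ} {S : Fin d → Set ℕ} {P : Set (Equiv.Perm (Fin d))}
    {x : FullShift (d + 1)} (hx : x ∈ codedShift (gapGens d S P) \ Xseq (gapGens d S P))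
    (hrec : ∀ k m, (∃ n ≥ m, x n = x k) ∧ ∃ n ≤ m, x n = x k) :
    ∃ i : Fin d, (S i).Infinite ∧ x = constSeq (Fin.castSucc i) := by
  obtain ⟨hX, hseq⟩ := hx
  have hlast : ∀ k, x k ≠ Fin.last d := fun k hk =>
    hseq (mem_Xseq_of_recurrent_last hX (fun m => hk ▸ (hrec k m).1) fun m => hk ▸ (hrec k m).2)
  have hconst : ∀ k, x k = x 0 := by
    intro k
    obtain ⟨a, ha, hxa⟩ := (hrec 0 (min 0 k - 1)).2
    obtain ⟨c, hc, hxc⟩ := (hrec 0 (max 0 k + 1)).1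
    obtain ⟨y, hy, hyx⟩ := mem_closure_iff_forall_window.1 hX (a.natAbs + c.natAbs)
    have hwin : ∀ j, a ≤ j → j ≤ c → y j = x j := fun j _ _ => hyx j (by omega)
    have := convex_of_ne_last hy (a := a) (b := k) (c := c) (by omega) (by omega)
      (fun j h₁ h₂ => by rw [hwin j h₁ h₂]; exact hlast j)
      (by rw [hwin a le_rfl (by omega), hwin c (by omega) le_rfl, hxa, hxc])
    rw [hwin k (by omega) (by omega), hwin a le_rfl (by omega)] at this
    rw [this, hxa]
  obtain ⟨i, hi⟩ := Fin.exists_castSucc_eq.2 (hlast 0)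
  refine ⟨i, Set.infinite_of_forall_exists_gt fun n => ?_, ?_⟩
  · obtain ⟨y, hy, hyx⟩ := mem_closure_iff_forall_window.1 hX n
    exact exists_le_mem_of_run hy (a := 0) fun k h₁ h₂ => by
      rw [hyx k (by omega), hconst, hi]
  · funext k
    rw [hconst, ← hi]
    rfl

lemma constSeq_mem_codedShift {d : ℕ} {S : Fin d → Set ℕ} (hS : ∀ i, (S i).Nonempty)
    {P : Set (Equiv.Perm (Fin d))} (hP : P.Nonempty) {i : Fin d} (hi : (S i).Infinite) :
    constSeq (Fin.castSucc i) ∈ codedShift (gapGens d S P) := by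
  refine mem_closure_iff_forall_window.2 fun n => ?_
  obtain ⟨σ, hσ⟩ := hP
  obtain ⟨m, hm, hnm⟩ := hi.exists_gt (2 * n)
  choose t ht using hS
  have hs : ∀ j, Function.update t i m j ∈ S j := by
    intro j
    rcases eq_or_ne j i with rfl | h
    · simpa using hm
    · simpa [h] using ht j
  obtain ⟨u, v, huv⟩ := exists_gapGen_eq_append σ (Function.update t i m) i
  rw [Function.update_self] at huv
  set g := gapGen d σ (Function.update t i m) with hg
  have hpos : 0 < g.length := by
    rw [hg, length_gapGen]
    omega
  have hmod (z : ℤ) : (z % g.length).toNat < g.length := by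
    have := Int.emod_nonneg z (show (g.length : ℤ) ≠ 0 by omega)
    have := Int.emod_lt_of_pos z (show (0 : ℤ) < g.length by omega)
    omega
  refine ⟨fun k => g[((k + u.length + n) % g.length).toNat]'(hmod _),
    ⟨fun j => j * g.length - u.length - n, fun a b hab => ?_, fun j => ?_⟩, fun k hk => ?_⟩
  · have := mul_lt_mul_of_pos_right hab (show (0 : ℤ) < g.length by omega)
    simp only
    omega
  · refine ⟨g, ⟨σ, hσ, _, hs, hg⟩, by ring, fun l hl => ?_⟩
    have : (j * g.length - u.length - n + l + u.length + n : ℤ) = l + j * g.length := by ring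
    simp only [this, Int.add_mul_emod_self_right]
    congr 1
    rw [Int.emod_eq_of_lt (by omega) (by omega)]
    simp
  · have hlen : g.length = u.length + m + v.length := by simp [huv, add_assoc]
    have : ((k + u.length + n) % g.length).toNat = u.length + (k + n).toNat := by
      rw [Int.emod_eq_of_lt (by omega) (by omega)]
      omega
    have hlt : (k + n).toNat < m := by omega
    simp only [this, constSeq]
    rw [List.getElem_of_eq huv, List.getElem_append_left (by simp; omega), List.getElem_append_right (by omega)]
    simp

lemma constSeq_notMem_Xseq {d : ℕ} {S : Fin d → Set ℕ} {P : Set (Equiv.Perm (Fin d))}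
    (i : Fin d) : constSeq (Fin.castSucc i) ∉ Xseq (gapGens d S P) := by
  intro h
  obtain ⟨q, -, -, -, -, -, -, hq, -⟩ := exists_gapGen_at h 0
  exact (Fin.castSucc_lt_last i).ne hq

section Dynamics

variable {d : ℕ}

lemma measurable_shift : Measurable (shift d) :=
  measurable_pi_lambda _ fun k => measurable_pi_apply (k + 1)

lemma iterate_shift_apply (n : ℕ) (x : FullShift d) (k : ℤ) :
    (shift d)^[n] x k = x (k + n) := by
  induction n generalizing x with
  | zero => simp
  | succ n ih =>
    rw [Function.iterate_succ_apply, ih, shift]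
    push_cast
    congr 1
    ring

/-- The right shift, inverse to `shift`. -/
def shiftInv (d : ℕ) : FullShift d → FullShift d := fun x k => x (k - 1)

lemma measurable_shiftInv : Measurable (shiftInv d) :=
  measurable_pi_lambda _ fun k => measurable_pi_apply (k - 1)

lemma iterate_shiftInv_apply (n : ℕ) (x : FullShift d) (k : ℤ) :
    (shiftInv d)^[n] x k = x (k - n) := by
  induction n generalizing x with
  | zero => simp
  | succ n ih =>
    rw [Function.iterate_succ_apply, ih, shiftInv]
    push_cast
    congr 1
    ring

lemma shiftInv_comp_shift : shiftInv d ∘ shift d = id := by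
  funext x k
  simp [shiftInv, shift]

lemma measurePreserving_shiftInv {μ : Measure (FullShift d)}
    (h : MeasurePreserving (shift d) μ μ) : MeasurePreserving (shiftInv d) μ μ := by
  refine ⟨measurable_shiftInv, ?_⟩
  conv_lhs => rw [← h.map_eq]
  rw [Measure.map_map measurable_shiftInv measurable_shift, shiftInv_comp_shift, Measure.map_id]

/-- Almost surely, every letter that occurs recurs in both directions. -/
lemma ae_recurrent {μ : Measure (FullShift d)} [IsFiniteMeasure μ]
    (h : MeasurePreserving (shift d) μ μ) :
    ∀ᵐ x ∂μ, ∀ k m : ℤ, (∃ n ≥ m, x n = x k) ∧ ∃ n ≤ m, x n = x k := by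
  have hmeas (k : ℤ) (a : Fin d) : NullMeasurableSet {x : FullShift d | x k = a} μ :=
    (measurable_pi_apply (X := fun _ : ℤ => Fin d) k (measurableSet_singleton a)).nullMeasurableSet
  have hright : ∀ᵐ x ∂μ, ∀ k a, x k = a → ∃ᶠ n in atTop, (shift d)^[n] x k = a :=
    ae_all_iff.2 fun k => ae_all_iff.2 fun a =>
      h.conservative.ae_mem_imp_frequently_image_mem (hmeas k a)
  have hleft : ∀ᵐ x ∂μ, ∀ k a, x k = a → ∃ᶠ n in atTop, (shiftInv d)^[n] x k = a :=
    ae_all_iff.2 fun k => ae_all_iff.2 fun a =>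
      (measurePreserving_shiftInv h).conservative.ae_mem_imp_frequently_image_mem (hmeas k a)
  filter_upwards [hright, hleft] with x hr hl k m
  obtain ⟨n, hn, hxn⟩ := frequently_atTop.1 (hr k _ rfl) (m - k).toNat
  obtain ⟨n', hn', hxn'⟩ := frequently_atTop.1 (hl k _ rfl) (k - m).toNat
  rw [iterate_shift_apply] at hxn
  rw [iterate_shiftInv_apply] at hxn'
  exact ⟨⟨_, by omega, hxn⟩, ⟨_, by omega, hxn'⟩⟩

lemma shift_constSeq (a : Fin d) : shift d (constSeq a) = constSeq a := rfl

lemma preimage_shift_singleton_constSeq (a : Fin d) :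
    shift d ⁻¹' {constSeq a} = {constSeq a} := by
  ext x
  simp only [Set.mem_preimage, Set.mem_singleton_iff]
  refine ⟨fun h => ?_, fun h => h ▸ shift_constSeq a⟩
  funext k
  simpa [shift, constSeq] using congrFun h (k - 1)

lemma ergodic_dirac_of_fixedPoint {α : Type*} [MeasurableSpace α] {f : α → α} (hf : Measurable f)
    {x : α} (hx : f x = x) : Ergodic f (Measure.dirac x) where
  measurable := hf
  map_eq := by rw [Measure.map_dirac' hf, hx]
  aeconst_set s hs _ := by
    rw [eventuallyConst_set]
    by_cases h : x ∈ s
    · exact Or.inl ((ae_dirac_iff hs).2 h)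
    · exact Or.inr ((ae_dirac_iff hs.compl).2 h)

lemma eq_dirac_of_measure_singleton_eq_one {α : Type*} [MeasurableSpace α]
    [MeasurableSingletonClass α] {μ : Measure α} [IsProbabilityMeasure μ] {x : α}
    (h : μ {x} = 1) : μ = Measure.dirac x := by
  have hae : ∀ᵐ y ∂μ, y ∈ ({x} : Set α) :=
    (prob_compl_eq_zero_iff (measurableSet_singleton x)).2 h
  rw [← Measure.restrict_eq_self_of_ae_mem hae, Measure.restrict_singleton, h, one_smul]

end Dynamics

/-- for a generalized gap shift with `I = {i : S_i infinite} ≠ ∅`,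
the ergodic invariant Borel probability measures giving full measure to
`X_lim = X \ X_seq` are exactly the Dirac measures at the fixed points `i^∞`, `i ∈ I`. -/
theorem statement11 (d : ℕ) (hd : 1 ≤ d) (S : Fin d → Set ℕ) (hS : ∀ i, (S i).Nonempty)
    (P : Set (Equiv.Perm (Fin d))) (hP : P.Nonempty) (hI : ∃ i, (S i).Infinite)
    (μ : Measure (FullShift (d + 1))) :
    (μ ∈ InvProb (codedShift (gapGens d S P)) ∧ Ergodic (shift (d + 1)) μ ∧
        μ (codedShift (gapGens d S P) \ Xseq (gapGens d S P)) = 1) ↔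
      ∃ i : Fin d, (S i).Infinite ∧ μ = Measure.dirac (constSeq (Fin.castSucc i)) := by
  constructor
  · rintro ⟨⟨hprob, -, -⟩, herg, hlim⟩
    set C : Set (FullShift (d + 1)) :=
      ⋃ i ∈ {i : Fin d | (S i).Infinite}, {constSeq (Fin.castSucc i)} with hC
    have hCpos : μ C ≠ 0 := by
      have hle : μ (codedShift (gapGens d S P) \ Xseq (gapGens d S P)) ≤ μ C := by
        refine measure_mono_ae ?_
        filter_upwards [ae_recurrent herg.toMeasurePreserving] with x hx hxlim
        obtain ⟨i, hi, rfl⟩ := eq_constSeq_of_recurrent hxlim hx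
        exact Set.mem_biUnion (x := i) hi rfl
      rw [hlim] at hle
      exact (zero_lt_one.trans_le hle).ne'
    have : ∃ i, (S i).Infinite ∧ μ {constSeq (Fin.castSucc i)} ≠ 0 := by
      by_contra! h
      exact hCpos ((measure_biUnion_null_iff (Set.to_countable _)).2 h)
    obtain ⟨i, hi, hμ⟩ := this
    refine ⟨i, hi, eq_dirac_of_measure_singleton_eq_one ?_⟩
    exact (herg.toPreErgodic.prob_eq_zero_or_one (measurableSet_singleton _)
      (preimage_shift_singleton_constSeq _)).resolve_left hμ
  · rintro ⟨i, hi, rfl⟩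
    have hmem := constSeq_mem_codedShift hS hP hi
    have herg := ergodic_dirac_of_fixedPoint measurable_shift (shift_constSeq (Fin.castSucc i))
    exact ⟨⟨inferInstance, herg.map_eq, Measure.dirac_apply_of_mem hmem⟩, herg,
      Measure.dirac_apply_of_mem ⟨hmem, constSeq_notMem_Xseq i⟩⟩

end PaperStmt
end
end
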